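/- arXiv:1711.01064 — 12 statements merged into one kernel-verified Lean document; each statement's English description precedes it below -/
import Mathlib

section
/- For any nonzero complex numbers a, z, any complex numbers w_1, …, w_{x_1-1}, and any integer x_1 ≥ 1, the following identity holds: (a²−a⁻²)(z²−z⁻²) Σ_{j=1}^{x_1−1} w_j ∏_{k=1}^{j−1}(az⁻¹−a⁻¹z w_k)(az⁻¹w_k−a⁻¹z) ∏_{k=j+1}^{x_1−1}(az w_k−a⁻¹z⁻¹)(az−a⁻¹z⁻¹w_k) = ∏_{k=1}^{x_1−1}(az w_k−a⁻¹z⁻¹)(az−a⁻¹z⁻¹w_k) − ∏_{k=1}^{x_1−1}(az⁻¹w_k−a⁻¹z)(az⁻¹−a⁻¹z w_k). -/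
open Finset

theorem telescope_aux (c : ℂ) (w P Q : ℕ → ℂ) (h : ∀ k, c * w k = P k - Q k) (n : ℕ) :
    c * ∑ j ∈ Finset.Icc 1 n, w j * (∏ k ∈ Finset.Icc 1 (j - 1), Q k) *
        (∏ k ∈ Finset.Icc (j + 1) n, P k)
    = (∏ k ∈ Finset.Icc 1 n, P k) - ∏ k ∈ Finset.Icc 1 n, Q k := by
  induction n with
  | zero => simp
  | succ n ih =>
    have e : ∑ j ∈ Finset.Icc 1 n, w j * (∏ k ∈ Finset.Icc 1 (j - 1), Q k) *
        (∏ k ∈ Finset.Icc (j + 1) (n + 1), P k)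
        = (∑ j ∈ Finset.Icc 1 n, w j * (∏ k ∈ Finset.Icc 1 (j - 1), Q k) *
        (∏ k ∈ Finset.Icc (j + 1) n, P k)) * P (n + 1) := by
      rw [Finset.sum_mul]
      refine Finset.sum_congr rfl fun j hj => ?_
      rw [Finset.mem_Icc] at hj
      rw [Finset.prod_Icc_succ_top (by omega)]
      ring
    rw [Finset.sum_Icc_succ_top (by omega), e,
      Finset.Icc_eq_empty (by omega : ¬ n + 1 + 1 ≤ n + 1),
      Finset.prod_Icc_succ_top (by omega), Finset.prod_Icc_succ_top (by omega)]
    simp only [Finset.prod_empty, Nat.add_sub_cancel]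
    linear_combination P (n + 1) * ih + (∏ k ∈ Finset.Icc 1 n, Q k) * h (n + 1)

/-- Lemma 3.1: the telescoping identity used in the computation of the simplest
wavefunction of the six-vertex model with reflecting end.  Products over empty
ranges equal 1 and sums over empty ranges equal 0. -/
theorem lemma_identity (a z : ℂ) (ha : a ≠ 0) (hz : z ≠ 0)
    (w : ℕ → ℂ) (x₁ : ℕ) (hx₁ : 1 ≤ x₁) :
    (a ^ (2:ℤ) - a ^ (-2:ℤ)) * (z ^ (2:ℤ) - z ^ (-2:ℤ)) *
      ∑ j ∈ Finset.Icc 1 (x₁ - 1), w j *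
        (∏ k ∈ Finset.Icc 1 (j - 1),
          (a * z⁻¹ - a⁻¹ * z * w k) * (a * z⁻¹ * w k - a⁻¹ * z)) *
        (∏ k ∈ Finset.Icc (j + 1) (x₁ - 1),
          (a * z * w k - a⁻¹ * z⁻¹) * (a * z - a⁻¹ * z⁻¹ * w k))
    = (∏ k ∈ Finset.Icc 1 (x₁ - 1),
        (a * z * w k - a⁻¹ * z⁻¹) * (a * z - a⁻¹ * z⁻¹ * w k))
      - (∏ k ∈ Finset.Icc 1 (x₁ - 1),
        (a * z⁻¹ * w k - a⁻¹ * z) * (a * z⁻¹ - a⁻¹ * z * w k)) := by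
  have key := telescope_aux ((a ^ (2:ℤ) - a ^ (-2:ℤ)) * (z ^ (2:ℤ) - z ^ (-2:ℤ))) w
    (fun k => (a * z * w k - a⁻¹ * z⁻¹) * (a * z - a⁻¹ * z⁻¹ * w k))
    (fun k => (a * z⁻¹ - a⁻¹ * z * w k) * (a * z⁻¹ * w k - a⁻¹ * z))
    (fun k => by
      simp only [zpow_neg]
      norm_cast
      field_simp
      ring) (x₁ - 1)
  rw [key]
  congr 1
  exact Finset.prod_congr rfl fun k _ => mul_comm _ _
end

section
/- For nonzero complex numbers a, b, z with z⁴ ≠ 1, complex numbers w_1, …, w_M, and an integer 1 ≤ x_1 ≤ M, the following identity holds: (a²−a⁻²) ∏_{k=x_1+1}^{M}(az⁻¹−a⁻¹z w_k)(az−a⁻¹z⁻¹w_k) × { (baz−b⁻¹a⁻¹z⁻¹) ∏_{k=1}^{x_1−1}(az w_k−a⁻¹z⁻¹) ∏_{k=1}^{x_1}(az−a⁻¹z⁻¹w_k) + (ba⁻¹z⁻¹−b⁻¹az)(az w_{x_1}−a⁻¹z⁻¹) ∏_{k=1}^{x_1−1}(az⁻¹−a⁻¹z w_k)(az⁻¹w_k−a⁻¹z)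 + (a²−a⁻²)² Σ_{j=1}^{x_1−1} w_j (ba⁻¹z⁻¹−b⁻¹az) ∏_{k=1}^{j−1}(az⁻¹−a⁻¹z w_k)(az⁻¹w_k−a⁻¹z) ∏_{k=j+1}^{x_1−1}(az w_k−a⁻¹z⁻¹) ∏_{k=j+1}^{x_1}(az−a⁻¹z⁻¹w_k) } = (a²−a⁻²)(−a²z²+a⁻²z⁻²) Σ_{τ=±1} (z^{2τ}−z^{−2τ})⁻¹ (ba⁻¹z^{−τ}−b⁻¹az^{τ}) ∏_{j=1}^{M}(az^{−τ}−a⁻¹z^{τ}w_j) ∏_{j=1}^{x_1−1}(az^{−τ}w_j−a⁻¹z^{τ}) ∏_{j=x_1+1}^{M}(az^{τ}−a⁻¹z^{−τ}w_j). -/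
open Finset

lemma aux_tele (P Q : ℕ → ℂ) (n : ℕ) :
    ∑ j ∈ Finset.Icc 1 n, (Q j - P j) * (∏ k ∈ Finset.Icc 1 (j - 1), P k) *
      (∏ k ∈ Finset.Icc (j + 1) n, Q k)
    = (∏ k ∈ Finset.Icc 1 n, Q k) - ∏ k ∈ Finset.Icc 1 n, P k := by
  induction n with
  | zero => simp
  | succ n ih =>
    rw [Finset.sum_Icc_succ_top (by omega),
      Finset.prod_Icc_succ_top (f := Q) (a := 1) (by omega),
      Finset.prod_Icc_succ_top (f := P) (a := 1) (b := n) (by omega)]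
    have h : ∑ j ∈ Finset.Icc 1 n, (Q j - P j) * (∏ k ∈ Finset.Icc 1 (j - 1), P k) *
        (∏ k ∈ Finset.Icc (j + 1) (n + 1), Q k)
        = (∑ j ∈ Finset.Icc 1 n, (Q j - P j) * (∏ k ∈ Finset.Icc 1 (j - 1), P k) *
        (∏ k ∈ Finset.Icc (j + 1) n, Q k)) * Q (n + 1) := by
      rw [Finset.sum_mul]
      refine Finset.sum_congr rfl fun j hj => ?_
      rw [Finset.mem_Icc] at hj
      rw [Finset.prod_Icc_succ_top (by omega)]
      ring
    rw [h, ih]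
    simp
    ring

lemma aux_split (f : ℕ → ℂ) (n M : ℕ) (h : n + 1 ≤ M) :
    ∏ k ∈ Finset.Icc 1 M, f k
    = (∏ k ∈ Finset.Icc 1 n, f k) * f (n + 1) * ∏ k ∈ Finset.Icc (n + 1 + 1) M, f k := by
  induction M, h using Nat.le_induction with
  | base => rw [Finset.prod_Icc_succ_top (by omega)]; simp
  | succ m hm ih =>
    rw [Finset.prod_Icc_succ_top (by omega), ih, Finset.prod_Icc_succ_top (by omega)]
    ring

lemma aux_final (a b z u A1 A2 A3 A4 T1 T2 S D : ℂ) (ha : a ≠ 0) (hb : b ≠ 0) (hz : z ≠ 0)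
    (hD : D ≠ 0) (hDz : D = z ^ 2 - (z ^ 2)⁻¹)
    (hS : (a ^ 2 - (a ^ 2)⁻¹) * D * S = A3 * A4 - A1 * A2) :
    (a ^ 2 - (a ^ 2)⁻¹) * (T1 * T2) *
      ((b * a * z - b⁻¹ * a⁻¹ * z⁻¹) * A3 * (A4 * (a * z - a⁻¹ * z⁻¹ * u))
        + (b * a⁻¹ * z⁻¹ - b⁻¹ * a * z) * (a * z * u - a⁻¹ * z⁻¹) * (A1 * A2)
        + (a ^ 2 - (a ^ 2)⁻¹) ^ 2 *
          ((b * a⁻¹ * z⁻¹ - b⁻¹ * a * z) * (a * z - a⁻¹ * z⁻¹ * u) * S))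
    = (a ^ 2 - (a ^ 2)⁻¹) * (-(a ^ 2 * z ^ 2) + (a ^ 2)⁻¹ * (z ^ 2)⁻¹) *
      (D⁻¹ * (b * a⁻¹ * z⁻¹ - b⁻¹ * a * z) * (A1 * (a * z⁻¹ - a⁻¹ * z * u) * T1) * A2 * T2
      + (-D)⁻¹ * (b * a⁻¹ * z - b⁻¹ * a * z⁻¹) * (A4 * (a * z - a⁻¹ * z⁻¹ * u) * T2) * A3 * T1) := by
  have h1 : ((b * a * z - b⁻¹ * a⁻¹ * z⁻¹) * D + (a ^ 2 - (a ^ 2)⁻¹) * (b * a⁻¹ * z⁻¹ - b⁻¹ * a * z))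
      = (a ^ 2 * z ^ 2 - (a ^ 2)⁻¹ * (z ^ 2)⁻¹) * (b * a⁻¹ * z - b⁻¹ * a * z⁻¹) := by
    rw [hDz]; field_simp; ring
  have h2 : (a * z * u - a⁻¹ * z⁻¹) * D - (a ^ 2 - (a ^ 2)⁻¹) * (a * z - a⁻¹ * z⁻¹ * u)
      = -(a ^ 2 * z ^ 2 - (a ^ 2)⁻¹ * (z ^ 2)⁻¹) * (a * z⁻¹ - a⁻¹ * z * u) := by
    rw [hDz]; field_simp; ring
  rw [inv_neg]
  apply mul_left_cancel₀ hD
  have hDD : D * D⁻¹ = 1 := mul_inv_cancel₀ hD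
  clear hDz
  generalize D⁻¹ = E at *
  generalize (a ^ 2)⁻¹ = a2 at *
  generalize (z ^ 2)⁻¹ = z2 at *
  generalize a⁻¹ = a' at *
  generalize b⁻¹ = b' at *
  generalize z⁻¹ = z' at *
  set K := a ^ 2 - a2
  set L := a ^ 2 * z ^ 2 - a2 * z2 with hL
  have hL' : -(a ^ 2 * z ^ 2) + a2 * z2 = -L := by rw [hL]; ring
  rw [hL']
  generalize L = L at *
  generalize K = K at *
  generalize a * z' - a' * z * u = v1 at *
  generalize a * z - a' * z' * u = v2 at *
  generalize a * z * u - a' * z' = v3 at *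
  generalize b * a' * z' - b' * a * z = v4 at *
  generalize b * a' * z - b' * a * z' = v5 at *
  generalize b * a * z - b' * a' * z' = v6 at *
  linear_combination K * T1 * T2 * A3 * A4 * v2 * h1 + K * T1 * T2 * v4 * A1 * A2 * h2
    + K * T1 * T2 * K * v4 * v2 * hS
    + K * L * T1 * T2 * (v4 * A1 * A2 * v1 - v5 * A3 * A4 * v2) * hDD

/-- Proposition 3.2: the `N = 1` wavefunction of the `U_q(sl_2)` six-vertex model with
reflecting end, expanded into matrix elements of `B`- and `D`-operators (left-hand
side), equals its closed two-term symmetrized form (right-hand side). -/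
theorem simplest_wavefunction (a b z : ℂ) (ha : a ≠ 0) (hb : b ≠ 0) (hz : z ≠ 0)
    (hz4 : z ^ 4 ≠ 1) (M : ℕ) (w : ℕ → ℂ) (x₁ : ℕ) (hx₁ : 1 ≤ x₁) (hx₁M : x₁ ≤ M) :
    (a ^ (2:ℤ) - a ^ (-2:ℤ)) *
      (∏ k ∈ Finset.Icc (x₁ + 1) M,
        (a * z⁻¹ - a⁻¹ * z * w k) * (a * z - a⁻¹ * z⁻¹ * w k)) *
      ((b * a * z - b⁻¹ * a⁻¹ * z⁻¹) *
          (∏ k ∈ Finset.Icc 1 (x₁ - 1), (a * z * w k - a⁻¹ * z⁻¹)) *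
          (∏ k ∈ Finset.Icc 1 x₁, (a * z - a⁻¹ * z⁻¹ * w k))
        + (b * a⁻¹ * z⁻¹ - b⁻¹ * a * z) * (a * z * w x₁ - a⁻¹ * z⁻¹) *
          (∏ k ∈ Finset.Icc 1 (x₁ - 1),
            (a * z⁻¹ - a⁻¹ * z * w k) * (a * z⁻¹ * w k - a⁻¹ * z))
        + (a ^ (2:ℤ) - a ^ (-2:ℤ)) ^ 2 *
          ∑ j ∈ Finset.Icc 1 (x₁ - 1),
            w j * (b * a⁻¹ * z⁻¹ - b⁻¹ * a * z) *
            (∏ k ∈ Finset.Icc 1 (j - 1),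
              (a * z⁻¹ - a⁻¹ * z * w k) * (a * z⁻¹ * w k - a⁻¹ * z)) *
            (∏ k ∈ Finset.Icc (j + 1) (x₁ - 1), (a * z * w k - a⁻¹ * z⁻¹)) *
            (∏ k ∈ Finset.Icc (j + 1) x₁, (a * z - a⁻¹ * z⁻¹ * w k)))
    = (a ^ (2:ℤ) - a ^ (-2:ℤ)) * (-(a ^ (2:ℤ) * z ^ (2:ℤ)) + a ^ (-2:ℤ) * z ^ (-2:ℤ)) *
      ∑ t ∈ ({1, -1} : Finset ℤ),
        (z ^ (2 * t) - z ^ (-(2 * t)))⁻¹ * (b * a⁻¹ * z ^ (-t) - b⁻¹ * a * z ^ t) *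
        (∏ j ∈ Finset.Icc 1 M, (a * z ^ (-t) - a⁻¹ * z ^ t * w j)) *
        (∏ j ∈ Finset.Icc 1 (x₁ - 1), (a * z ^ (-t) * w j - a⁻¹ * z ^ t)) *
        (∏ j ∈ Finset.Icc (x₁ + 1) M, (a * z ^ t - a⁻¹ * z ^ (-t) * w j)) := by
  obtain ⟨n, rfl⟩ : ∃ n, x₁ = n + 1 := ⟨x₁ - 1, by omega⟩
  have hD : z ^ 2 - (z ^ 2)⁻¹ ≠ 0 := by
    intro h
    apply hz4
    have h2 : z ^ 2 ≠ 0 := pow_ne_zero 2 hz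
    field_simp at h
    linear_combination h
  have hzp : ∀ c : ℂ, c ^ (2:ℤ) = c ^ 2 := fun c => by norm_cast
  have hzn : ∀ c : ℂ, c ^ (-2:ℤ) = (c ^ 2)⁻¹ := fun c => by rw [zpow_neg]; norm_cast
  rw [Finset.sum_pair (by decide)]
  simp only [add_tsub_cancel_right, mul_one, mul_neg, neg_neg, zpow_one, zpow_neg_one, hzp, hzn]
  have hsum : ∑ j ∈ Finset.Icc 1 n,
            w j * (b * a⁻¹ * z⁻¹ - b⁻¹ * a * z) *
            (∏ k ∈ Finset.Icc 1 (j - 1),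
              (a * z⁻¹ - a⁻¹ * z * w k) * (a * z⁻¹ * w k - a⁻¹ * z)) *
            (∏ k ∈ Finset.Icc (j + 1) n, (a * z * w k - a⁻¹ * z⁻¹)) *
            (∏ k ∈ Finset.Icc (j + 1) (n + 1), (a * z - a⁻¹ * z⁻¹ * w k))
      = (b * a⁻¹ * z⁻¹ - b⁻¹ * a * z) * (a * z - a⁻¹ * z⁻¹ * w (n + 1)) *
        ∑ j ∈ Finset.Icc 1 n, w j * (∏ k ∈ Finset.Icc 1 (j - 1),
              (a * z⁻¹ - a⁻¹ * z * w k) * (a * z⁻¹ * w k - a⁻¹ * z)) *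
            (∏ k ∈ Finset.Icc (j + 1) n,
              (a * z * w k - a⁻¹ * z⁻¹) * (a * z - a⁻¹ * z⁻¹ * w k)) := by
    rw [Finset.mul_sum]
    refine Finset.sum_congr rfl fun j hj => ?_
    rw [Finset.mem_Icc] at hj
    rw [Finset.prod_Icc_succ_top (by omega)]
    simp only [Finset.prod_mul_distrib]
    ring
  have htele := aux_tele (fun k => (a * z⁻¹ - a⁻¹ * z * w k) * (a * z⁻¹ * w k - a⁻¹ * z))
    (fun k => (a * z * w k - a⁻¹ * z⁻¹) * (a * z - a⁻¹ * z⁻¹ * w k)) n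
  have hS : (a ^ 2 - (a ^ 2)⁻¹) * (z ^ 2 - (z ^ 2)⁻¹) *
      (∑ j ∈ Finset.Icc 1 n, w j * (∏ k ∈ Finset.Icc 1 (j - 1),
              (a * z⁻¹ - a⁻¹ * z * w k) * (a * z⁻¹ * w k - a⁻¹ * z)) *
            (∏ k ∈ Finset.Icc (j + 1) n,
              (a * z * w k - a⁻¹ * z⁻¹) * (a * z - a⁻¹ * z⁻¹ * w k)))
      = (∏ k ∈ Finset.Icc 1 n, (a * z * w k - a⁻¹ * z⁻¹)) *
        (∏ k ∈ Finset.Icc 1 n, (a * z - a⁻¹ * z⁻¹ * w k))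
        - (∏ k ∈ Finset.Icc 1 n, (a * z⁻¹ - a⁻¹ * z * w k)) *
        (∏ k ∈ Finset.Icc 1 n, (a * z⁻¹ * w k - a⁻¹ * z)) := by
    rw [← Finset.prod_mul_distrib, ← Finset.prod_mul_distrib, ← htele, Finset.mul_sum]
    refine Finset.sum_congr rfl fun j _ => ?_
    rw [← mul_assoc, ← mul_assoc]
    congr 2
    field_simp
    ring
  rw [hsum, aux_split _ n M hx₁M, aux_split _ n M hx₁M,
    Finset.prod_Icc_succ_top (b := n) (by omega)]
  simp only [Finset.prod_mul_distrib] at hS ⊢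
  have := aux_final a b z (w (n + 1)) _ _ _ _ (∏ k ∈ Finset.Icc (n + 1 + 1) M, (a * z⁻¹ - a⁻¹ * z * w k))
    (∏ k ∈ Finset.Icc (n + 1 + 1) M, (a * z - a⁻¹ * z⁻¹ * w k)) _ _ ha hb hz hD rfl hS
  rw [neg_sub] at this
  exact this
end

section
/- The function F_{M,N}(z_1,…,z_N|w_1,…,w_M|x_1,…,x_N) is symmetric with respect to z_1,…,z_N: for every permutation σ ∈ S_N, F_{M,N}(z_{σ(1)},…,z_{σ(N)}|w_1,…,w_M|x_1,…,x_N) = F_{M,N}(z_1,…,z_N|w_1,…,w_M|x_1,…,x_N). -/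
open Finset

def eps {N : ℕ} (τ : Fin N → Bool) (j : Fin N) : ℤ := if τ j then 1 else -1

noncomputable def pairFactor (a Z1 Z2 : ℂ) (t1 t2 : ℤ) : ℂ :=
  ((a ^ (2:ℤ) * Z1 ^ t1 * Z2 ^ t2 - a ^ (-2:ℤ) * Z1 ^ (-t1) * Z2 ^ (-t2)) *
   (a ^ (2:ℤ) * Z1 ^ (-t1) * Z2 ^ t2 - a ^ (-2:ℤ) * Z1 ^ t1 * Z2 ^ (-t2))) /
  ((Z1 ^ t1 * Z2 ^ t2 - Z1 ^ (-t1) * Z2 ^ (-t2)) *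
   (Z1 ^ (-t1) * Z2 ^ t2 - Z1 ^ t1 * Z2 ^ (-t2)))

/-- The symmetric function `F_{M,N}(z_1,…,z_N|w_1,…,w_M|x_1,…,x_N)`,
where `x k` for `k = 0,…,N-1` encodes `x_{k+1}`. -/
noncomputable def FF (a b : ℂ) (M N : ℕ) (z : Fin N → ℂ) (w : Fin M → ℂ) (x : ℕ → ℕ) : ℂ :=
  (a ^ (2:ℤ) - a ^ (-2:ℤ)) ^ N *
  (∏ j, (-(a ^ (2:ℤ) * z j ^ (2:ℤ)) + a ^ (-2:ℤ) * z j ^ (-2:ℤ))) *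
  ∑ σ : Equiv.Perm (Fin N), ∑ τ : Fin N → Bool,
    (∏ j, (z j ^ (2 * eps τ j) - z j ^ (-(2 * eps τ j)))⁻¹) *
    (∏ p ∈ Finset.univ.filter (fun p : Fin N × Fin N => p.1 < p.2),
      pairFactor a (z (σ p.1)) (z (σ p.2)) (eps τ (σ p.1)) (eps τ (σ p.2))) *
    (∏ k, (b * a⁻¹ * z (σ k) ^ (-(eps τ (σ k))) - b⁻¹ * a * z (σ k) ^ (eps τ (σ k)))) *
    (∏ k, ∏ j : Fin M, (a * z (σ k) ^ (-(eps τ (σ k))) - a⁻¹ * z (σ k) ^ (eps τ (σ k)) * w j)) *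
    (∏ k : Fin N, ∏ j ∈ Finset.univ.filter (fun j : Fin M => (j : ℕ) + 1 < x k.val),
      (a * z (σ k) ^ (-(eps τ (σ k))) * w j - a⁻¹ * z (σ k) ^ (eps τ (σ k)))) *
    (∏ k : Fin N, ∏ j ∈ Finset.univ.filter (fun j : Fin M => x k.val ≤ (j : ℕ)),
      (a * z (σ k) ^ (eps τ (σ k)) - a⁻¹ * z (σ k) ^ (-(eps τ (σ k))) * w j))

/-- The dual symmetric function `F̄_{M,N}(z_1,…,z_N|w_1,…,w_M|x̄_1,…,x̄_N)`. -/
noncomputable def FBar (a b : ℂ) (M N : ℕ) (z : Fin N → ℂ) (w : Fin M → ℂ) (x : ℕ → ℕ) : ℂ :=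
  (a ^ (2:ℤ) - a ^ (-2:ℤ)) ^ N *
  (∏ j, (-(a ^ (2:ℤ) * z j ^ (2:ℤ)) + a ^ (-2:ℤ) * z j ^ (-2:ℤ))) *
  ∑ σ : Equiv.Perm (Fin N), ∑ τ : Fin N → Bool,
    (∏ j, (z j ^ (2 * eps τ j) - z j ^ (-(2 * eps τ j)))⁻¹) *
    (∏ p ∈ Finset.univ.filter (fun p : Fin N × Fin N => p.1 < p.2),
      pairFactor a (z (σ p.1)) (z (σ p.2)) (eps τ (σ p.1)) (eps τ (σ p.2))) *
    (∏ k, (b * a * z (σ k) ^ (eps τ (σ k)) - b⁻¹ * a⁻¹ * z (σ k) ^ (-(eps τ (σ k))))) *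
    (∏ k, ∏ j : Fin M, (a * z (σ k) ^ (-(eps τ (σ k))) * w j - a⁻¹ * z (σ k) ^ (eps τ (σ k)))) *
    (∏ k : Fin N, ∏ j ∈ Finset.univ.filter (fun j : Fin M => (j : ℕ) + 1 < x k.val),
      (a * z (σ k) ^ (-(eps τ (σ k))) - a⁻¹ * z (σ k) ^ (eps τ (σ k)) * w j)) *
    (∏ k : Fin N, ∏ j ∈ Finset.univ.filter (fun j : Fin M => x k.val ≤ (j : ℕ)),
      (a * z (σ k) ^ (eps τ (σ k)) * w j - a⁻¹ * z (σ k) ^ (-(eps τ (σ k)))))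

/-- `xfun T k` is the `(k+1)`-st smallest element of `T`, in 1-based labelling. -/
def xfun {M : ℕ} (T : Finset (Fin M)) (k : ℕ) : ℕ :=
  ((T.sort (· ≤ ·)).map (fun j : Fin M => (j : ℕ) + 1)).getD k 0

/-- Property (2): the symmetric function `F_{M,N}` is symmetric in `z_1,…,z_N`. -/
theorem F_symmetric (a b : ℂ) (M N : ℕ) (z : Fin N → ℂ) (w : Fin M → ℂ) (x : ℕ → ℕ)
    (ha : a ≠ 0) (hb : b ≠ 0) (hz : ∀ j, z j ≠ 0) (hz4 : ∀ j, z j ^ 4 ≠ 1)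
    (hzz : ∀ j k, j ≠ k → z j ^ 2 * z k ^ 2 ≠ 1)
    (hzz' : ∀ j k, j ≠ k → z j ^ 2 ≠ z k ^ 2)
    (hx1 : ∀ k : Fin N, 1 ≤ x k.val) (hxM : ∀ k : Fin N, x k.val ≤ M)
    (hmono : ∀ j k : Fin N, j < k → x j.val < x k.val)
    (σ₀ : Equiv.Perm (Fin N)) :
    FF a b M N (z ∘ σ₀) w x = FF a b M N z w x := by
  unfold FF
  congr 1
  · congr 1
    exact Equiv.prod_comp σ₀ (fun j => (-(a ^ (2:ℤ) * z j ^ (2:ℤ)) + a ^ (-2:ℤ) * z j ^ (-2:ℤ)))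
  · refine Fintype.sum_equiv (Equiv.mulLeft σ₀) _ _ (fun σ => ?_)
    refine Fintype.sum_equiv (Equiv.arrowCongr σ₀ (Equiv.refl Bool)) _ _ (fun τ => ?_)
    have h : ∀ i, eps (Equiv.arrowCongr σ₀ (Equiv.refl Bool) τ) (σ₀ i) = eps τ i := by
      intro i
      simp [eps, Equiv.arrowCongr]
    rw [← Equiv.prod_comp σ₀ (fun j => (z j ^ (2 * eps (Equiv.arrowCongr σ₀ (Equiv.refl Bool) τ) j)
      - z j ^ (-(2 * eps (Equiv.arrowCongr σ₀ (Equiv.refl Bool) τ) j)))⁻¹)]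
    simp only [Equiv.coe_mulLeft, Equiv.Perm.mul_apply, Function.comp_apply, h]
end

section
/- The function F̄_{M,N}(z_1,…,z_N|w_1,…,w_M|x̄_1,…,x̄_N) is symmetric with respect to z_1,…,z_N: for every permutation σ ∈ S_N, F̄_{M,N}(z_{σ(1)},…,z_{σ(N)}|w_1,…,w_M|x̄_1,…,x̄_N) = F̄_{M,N}(z_1,…,z_N|w_1,…,w_M|x̄_1,…,x̄_N). -/
open Finset

/-- Property (2) for the dual: the symmetric function `F̄_{M,N}` is symmetric in
`z_1,…,z_N`. -/
theorem FBar_symmetric (a b : ℂ) (M N : ℕ) (z : Fin N → ℂ) (w : Fin M → ℂ) (x : ℕ → ℕ)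
    (ha : a ≠ 0) (hb : b ≠ 0) (hz : ∀ j, z j ≠ 0) (hz4 : ∀ j, z j ^ 4 ≠ 1)
    (hzz : ∀ j k, j ≠ k → z j ^ 2 * z k ^ 2 ≠ 1)
    (hzz' : ∀ j k, j ≠ k → z j ^ 2 ≠ z k ^ 2)
    (hx1 : ∀ k : Fin N, 1 ≤ x k.val) (hxM : ∀ k : Fin N, x k.val ≤ M)
    (hmono : ∀ j k : Fin N, j < k → x j.val < x k.val)
    (σ₀ : Equiv.Perm (Fin N)) :
    FBar a b M N (z ∘ σ₀) w x = FBar a b M N z w x := by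
  unfold FBar
  congr 1
  · congr 1
    exact Equiv.prod_comp σ₀
      (fun j => (-(a ^ (2:ℤ) * z j ^ (2:ℤ)) + a ^ (-2:ℤ) * z j ^ (-2:ℤ)))
  · refine Fintype.sum_equiv (Equiv.mulLeft σ₀) _ _ (fun σ => ?_)
    refine Fintype.sum_equiv (Equiv.arrowCongr σ₀ (Equiv.refl Bool)) _ _ (fun τ => ?_)
    have he : ∀ i, eps (Equiv.arrowCongr σ₀ (Equiv.refl Bool) τ) (σ₀ i) = eps τ i := by
      intro i
      simp [eps, Equiv.arrowCongr]
    rw [← Equiv.prod_comp σ₀ (fun j =>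
      (z j ^ (2 * eps (Equiv.arrowCongr σ₀ (Equiv.refl Bool) τ) j) -
        z j ^ (-(2 * eps (Equiv.arrowCongr σ₀ (Equiv.refl Bool) τ) j)))⁻¹)]
    simp only [Equiv.coe_mulLeft, Equiv.Perm.mul_apply, he, Function.comp_apply]
end

section
/- For each i ∈ {1,…,N}, replacing z_i by z_i⁻¹ in F_{M,N} changes its value by the factor (a²z_i⁻²−a⁻²z_i²)/(a²z_i²−a⁻²z_i⁻²); equivalently, (a²z_i²−a⁻²z_i⁻²) · F_{M,N}(z_1,…,z_i⁻¹,…,z_N|w_1,…,w_M|x_1,…,x_N) = (a²z_i⁻²−a⁻²z_i²) · F_{M,N}(z_1,…,z_i,…,z_N|w_1,…,w_M|x_1,…,x_N). -/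
open Finset

def flipAt {N : ℕ} (i : Fin N) (τ : Fin N → Bool) : Fin N → Bool :=
  Function.update τ i (!(τ i))

theorem flipAt_invol {N : ℕ} (i : Fin N) : Function.Involutive (flipAt i) := by
  intro τ
  simp [flipAt]

theorem eps_flip {N : ℕ} (i : Fin N) (τ : Fin N → Bool) (j : Fin N) :
    eps (flipAt i τ) j = if j = i then - eps τ j else eps τ j := by
  by_cases h : j = i
  · subst h
    cases h' : τ j <;> simp [eps, flipAt, h']
  · simp [eps, flipAt, h]

theorem key1 {N : ℕ} (z : Fin N → ℂ) (i : Fin N) (τ : Fin N → Bool) (j : Fin N) :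
    (Function.update z i (z i)⁻¹) j ^ (eps (flipAt i τ) j) = z j ^ eps τ j := by
  rw [eps_flip]
  by_cases h : j = i
  · subst h
    simp
  · simp [h]

theorem key2 {N : ℕ} (z : Fin N → ℂ) (i : Fin N) (τ : Fin N → Bool) (j : Fin N) :
    (Function.update z i (z i)⁻¹) j ^ (-(eps (flipAt i τ) j)) = z j ^ (-(eps τ j)) := by
  rw [zpow_neg, key1, zpow_neg]

theorem key3 {N : ℕ} (z : Fin N → ℂ) (i : Fin N) (τ : Fin N → Bool) (j : Fin N) :
    (Function.update z i (z i)⁻¹) j ^ (2 * (eps (flipAt i τ) j)) = z j ^ (2 * (eps τ j)) := by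
  rw [mul_comm, zpow_mul, key1, mul_comm, zpow_mul]

theorem key4 {N : ℕ} (z : Fin N → ℂ) (i : Fin N) (τ : Fin N → Bool) (j : Fin N) :
    (Function.update z i (z i)⁻¹) j ^ (-(2 * (eps (flipAt i τ) j))) =
      z j ^ (-(2 * (eps τ j))) := by
  rw [zpow_neg, key3, zpow_neg]

/-- Property (3): replacing `z_i` by `z_i⁻¹` in `F_{M,N}` changes its value by the
factor `(a²z_i⁻²−a⁻²z_i²)/(a²z_i²−a⁻²z_i⁻²)`. -/
theorem F_inversion (a b : ℂ) (M N : ℕ) (z : Fin N → ℂ) (w : Fin M → ℂ) (x : ℕ → ℕ)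
    (ha : a ≠ 0) (hb : b ≠ 0) (hz : ∀ j, z j ≠ 0) (hz4 : ∀ j, z j ^ 4 ≠ 1)
    (hzz : ∀ j k, j ≠ k → z j ^ 2 * z k ^ 2 ≠ 1)
    (hzz' : ∀ j k, j ≠ k → z j ^ 2 ≠ z k ^ 2)
    (hx1 : ∀ k : Fin N, 1 ≤ x k.val) (hxM : ∀ k : Fin N, x k.val ≤ M)
    (hmono : ∀ j k : Fin N, j < k → x j.val < x k.val)
    (i : Fin N) :
    (a ^ (2:ℤ) * z i ^ (2:ℤ) - a ^ (-2:ℤ) * z i ^ (-2:ℤ)) *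
      FF a b M N (Function.update z i (z i)⁻¹) w x
    = (a ^ (2:ℤ) * z i ^ (-2:ℤ) - a ^ (-2:ℤ) * z i ^ (2:ℤ)) * FF a b M N z w x := by
  unfold FF
  have hpre : (a ^ (2:ℤ) * z i ^ (2:ℤ) - a ^ (-2:ℤ) * z i ^ (-2:ℤ)) *
      (∏ j, (-(a ^ (2:ℤ) * (Function.update z i (z i)⁻¹) j ^ (2:ℤ)) +
        a ^ (-2:ℤ) * (Function.update z i (z i)⁻¹) j ^ (-2:ℤ))) =
      (a ^ (2:ℤ) * z i ^ (-2:ℤ) - a ^ (-2:ℤ) * z i ^ (2:ℤ)) *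
      (∏ j, (-(a ^ (2:ℤ) * z j ^ (2:ℤ)) + a ^ (-2:ℤ) * z j ^ (-2:ℤ))) := by
    rw [← Finset.mul_prod_erase _ _ (Finset.mem_univ i),
      ← Finset.mul_prod_erase _ (fun j => -(a ^ (2:ℤ) * z j ^ (2:ℤ)) + a ^ (-2:ℤ) * z j ^ (-2:ℤ))
        (Finset.mem_univ i)]
    have h : ∀ j ∈ Finset.univ.erase i,
        (-(a ^ (2:ℤ) * (Function.update z i (z i)⁻¹) j ^ (2:ℤ)) +
          a ^ (-2:ℤ) * (Function.update z i (z i)⁻¹) j ^ (-2:ℤ)) =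
        -(a ^ (2:ℤ) * z j ^ (2:ℤ)) + a ^ (-2:ℤ) * z j ^ (-2:ℤ) := by
      intro j hj
      rw [Function.update_of_ne (Finset.ne_of_mem_erase hj)]
    rw [Finset.prod_congr rfl h]
    simp only [Function.update_self, inv_zpow', neg_neg]
    ring
  have gen : ∀ A B C P P' S S' : ℂ, A * P = B * P' → S = S' →
      A * (C * P * S) = B * (C * P' * S') := by
    intro A B C P P' S S' h1 h2
    subst h2
    linear_combination C * S * h1
  refine gen _ _ _ _ _ _ _ hpre ?_
  refine Finset.sum_congr rfl fun σ _ => ?_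
  rw [← Equiv.sum_comp (flipAt_invol i).toPerm]
  refine Finset.sum_congr rfl fun τ _ => ?_
  simp only [Function.Involutive.coe_toPerm, pairFactor, key1, key2, key3, key4]
end

section
/- For each i ∈ {1,…,N}, replacing z_i by z_i⁻¹ in F̄_{M,N} changes its value by the factor (a²z_i⁻²−a⁻²z_i²)/(a²z_i²−a⁻²z_i⁻²); equivalently, (a²z_i²−a⁻²z_i⁻²) · F̄_{M,N}(z_1,…,z_i⁻¹,…,z_N|w_1,…,w_M|x̄_1,…,x̄_N) = (a²z_i⁻²−a⁻²z_i²) · F̄_{M,N}(z_1,…,z_i,…,z_N|w_1,…,w_M|x̄_1,…,x̄_N). -/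
open Finset

theorem flip_zpow {N : ℕ} (z : Fin N → ℂ) (i : Fin N) (τ : Fin N → Bool) (j : Fin N) :
    Function.update z i (z i)⁻¹ j ^ (eps τ j)
      = z j ^ (eps (Function.update τ i (!(τ i))) j) := by
  by_cases h : j = i
  · subst h
    cases ht : τ j <;> simp [eps, ht]
  · simp [eps, h]

theorem flip_zpow_neg {N : ℕ} (z : Fin N → ℂ) (i : Fin N) (τ : Fin N → Bool) (j : Fin N) :
    Function.update z i (z i)⁻¹ j ^ (-(eps τ j))
      = z j ^ (-(eps (Function.update τ i (!(τ i))) j)) := by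
  rw [zpow_neg, zpow_neg, flip_zpow]

theorem flip_zpow_two {N : ℕ} (z : Fin N → ℂ) (i : Fin N) (τ : Fin N → Bool) (j : Fin N) :
    Function.update z i (z i)⁻¹ j ^ (2 * eps τ j)
      = z j ^ (2 * eps (Function.update τ i (!(τ i))) j) := by
  rw [mul_comm, zpow_mul, flip_zpow, ← zpow_mul, mul_comm]

theorem flip_zpow_two_neg {N : ℕ} (z : Fin N → ℂ) (i : Fin N) (τ : Fin N → Bool) (j : Fin N) :
    Function.update z i (z i)⁻¹ j ^ (-(2 * eps τ j))
      = z j ^ (-(2 * eps (Function.update τ i (!(τ i))) j)) := by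
  rw [zpow_neg, zpow_neg, flip_zpow_two]

theorem flip_invol {N : ℕ} (i : Fin N) :
    Function.Involutive (fun τ : Fin N → Bool => Function.update τ i (!(τ i))) := by
  intro τ
  simp

/-- Property (3) for the dual: replacing `z_i` by `z_i⁻¹` in `F̄_{M,N}` changes its
value by the factor `(a²z_i⁻²−a⁻²z_i²)/(a²z_i²−a⁻²z_i⁻²)`. -/
theorem FBar_inversion (a b : ℂ) (M N : ℕ) (z : Fin N → ℂ) (w : Fin M → ℂ) (x : ℕ → ℕ)
    (ha : a ≠ 0) (hb : b ≠ 0) (hz : ∀ j, z j ≠ 0) (hz4 : ∀ j, z j ^ 4 ≠ 1)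
    (hzz : ∀ j k, j ≠ k → z j ^ 2 * z k ^ 2 ≠ 1)
    (hzz' : ∀ j k, j ≠ k → z j ^ 2 ≠ z k ^ 2)
    (hx1 : ∀ k : Fin N, 1 ≤ x k.val) (hxM : ∀ k : Fin N, x k.val ≤ M)
    (hmono : ∀ j k : Fin N, j < k → x j.val < x k.val)
    (i : Fin N) :
    (a ^ (2:ℤ) * z i ^ (2:ℤ) - a ^ (-2:ℤ) * z i ^ (-2:ℤ)) *
      FBar a b M N (Function.update z i (z i)⁻¹) w x
    = (a ^ (2:ℤ) * z i ^ (-2:ℤ) - a ^ (-2:ℤ) * z i ^ (2:ℤ)) * FBar a b M N z w x := by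
  unfold FBar
  have hpre : ∀ y : Fin N → ℂ,
      (∏ j, (-(a ^ (2:ℤ) * y j ^ (2:ℤ)) + a ^ (-2:ℤ) * y j ^ (-2:ℤ)))
      = (-(a ^ (2:ℤ) * y i ^ (2:ℤ)) + a ^ (-2:ℤ) * y i ^ (-2:ℤ)) *
        ∏ j ∈ Finset.univ.erase i,
          (-(a ^ (2:ℤ) * y j ^ (2:ℤ)) + a ^ (-2:ℤ) * y j ^ (-2:ℤ)) := fun y =>
    (Finset.mul_prod_erase Finset.univ _ (Finset.mem_univ i)).symm
  have herase : (∏ j ∈ Finset.univ.erase i,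
          (-(a ^ (2:ℤ) * Function.update z i (z i)⁻¹ j ^ (2:ℤ))
            + a ^ (-2:ℤ) * Function.update z i (z i)⁻¹ j ^ (-2:ℤ)))
      = ∏ j ∈ Finset.univ.erase i,
          (-(a ^ (2:ℤ) * z j ^ (2:ℤ)) + a ^ (-2:ℤ) * z j ^ (-2:ℤ)) := by
    refine Finset.prod_congr rfl fun j hj => ?_
    rw [Function.update_of_ne (Finset.ne_of_mem_erase hj)]
  rw [hpre, hpre z, herase, Function.update_self, inv_zpow', inv_zpow', neg_neg]
  simp only [pairFactor, flip_zpow, flip_zpow_neg, flip_zpow_two, flip_zpow_two_neg]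
  have aux : ∀ p q r s c P S S' : ℂ, S = S' →
      (p - q) * (c * ((-r + s) * P) * S') = (r - s) * (c * ((-p + q) * P) * S) := by
    intro p q r s c P S S' h
    rw [h]
    ring
  refine aux _ _ _ _ _ _ _ _ (Finset.sum_congr rfl fun σ _ => ?_)
  exact (Equiv.sum_comp (flip_invol i).toPerm _).symm
end

section
/- Suppose x_N = M. Then, viewed as a function of the single variable w_M (with all other arguments fixed), F_{M,N}(z_1,…,z_N|w_1,…,w_M|x_1,…,x_N) is a polynomial in w_M of degree at most 2N−1. -/
open Finset

/-- `f` is a polynomial function of degree at most `d`. -/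
def PolyLe (d : ℕ) (f : ℂ → ℂ) : Prop :=
  ∃ p : Polynomial ℂ, p.natDegree ≤ d ∧ ∀ u, f u = p.eval u

theorem PolyLe.const (c : ℂ) : PolyLe 0 (fun _ => c) :=
  ⟨Polynomial.C c, by simp, by simp⟩

theorem PolyLe.mono {d e : ℕ} {f : ℂ → ℂ} (h : PolyLe d f) (hde : d ≤ e) : PolyLe e f := by
  obtain ⟨p, hp, h⟩ := h
  exact ⟨p, hp.trans hde, h⟩

theorem PolyLe.mul {d e : ℕ} {f g : ℂ → ℂ} (hf : PolyLe d f) (hg : PolyLe e g) :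
    PolyLe (d + e) (fun u => f u * g u) := by
  obtain ⟨p, hp, hf⟩ := hf
  obtain ⟨q, hq, hg⟩ := hg
  exact ⟨p * q, Polynomial.natDegree_mul_le.trans (by omega), fun u => by simp [hf, hg]⟩

theorem PolyLe.sub {d : ℕ} {f g : ℂ → ℂ} (hf : PolyLe d f) (hg : PolyLe d g) :
    PolyLe d (fun u => f u - g u) := by
  obtain ⟨p, hp, hf⟩ := hf
  obtain ⟨q, hq, hg⟩ := hg
  exact ⟨p - q, (Polynomial.natDegree_sub_le p q).trans (max_le hp hq),
    fun u => by simp [hf, hg]⟩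

theorem PolyLe.sum {ι : Type*} (s : Finset ι) {d : ℕ} {f : ι → ℂ → ℂ}
    (h : ∀ i, PolyLe d (f i)) : PolyLe d (fun u => ∑ i ∈ s, f i u) := by
  choose p hp hf using h
  exact ⟨∑ i ∈ s, p i, Polynomial.natDegree_sum_le_of_forall_le s p (fun i _ => hp i),
    fun u => by simp [hf, Polynomial.eval_finset_sum]⟩

theorem PolyLe.prod {ι : Type*} (s : Finset ι) {d : ι → ℕ} {f : ι → ℂ → ℂ}
    (h : ∀ i, PolyLe (d i) (f i)) : PolyLe (∑ i ∈ s, d i) (fun u => ∏ i ∈ s, f i u) := by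
  choose p hp hf using h
  exact ⟨∏ i ∈ s, p i, (Polynomial.natDegree_prod_le s p).trans (Finset.sum_le_sum fun i _ => hp i),
    fun u => by simp [hf, Polynomial.eval_prod]⟩

theorem PolyLe.update {M : ℕ} (w : Fin M → ℂ) (l j : Fin M) :
    PolyLe (if j = l then 1 else 0) (fun u => Function.update w l u j) := by
  by_cases h : j = l
  · subst h
    exact ⟨Polynomial.X, by simp, by simp⟩
  · exact ⟨Polynomial.C (w j), by simp, by simp [h]⟩

theorem PolyLe.lin {M : ℕ} (w : Fin M → ℂ) (l j : Fin M) (c e : ℂ) :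
    PolyLe (if j = l then 1 else 0) (fun u => c - e * Function.update w l u j) :=
  ((PolyLe.const c).mono (Nat.zero_le _)).sub
    (((PolyLe.const e).mul (PolyLe.update w l j)).mono (by omega))

theorem PolyLe.lin' {M : ℕ} (w : Fin M → ℂ) (l j : Fin M) (c e : ℂ) :
    PolyLe (if j = l then 1 else 0) (fun u => e * Function.update w l u j - c) :=
  (((PolyLe.const e).mul (PolyLe.update w l j)).mono (by omega)).sub
    ((PolyLe.const c).mono (Nat.zero_le _))

/-- Property (1): when `x_N = M`, the symmetric function `F_{M,N}`, viewed as a function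
of `w_M` alone, is a polynomial in `w_M` of degree at most `2N−1`. -/
theorem F_polynomial_in_wM (a b : ℂ) (M N : ℕ) (hM : 0 < M) (hN : 0 < N)
    (z : Fin N → ℂ) (w : Fin M → ℂ) (x : ℕ → ℕ)
    (ha : a ≠ 0) (hb : b ≠ 0) (hz : ∀ j, z j ≠ 0) (hz4 : ∀ j, z j ^ 4 ≠ 1)
    (hzz : ∀ j k, j ≠ k → z j ^ 2 * z k ^ 2 ≠ 1)
    (hzz' : ∀ j k, j ≠ k → z j ^ 2 ≠ z k ^ 2)
    (hx1 : ∀ k : Fin N, 1 ≤ x k.val) (hxM : ∀ k : Fin N, x k.val ≤ M)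
    (hmono : ∀ j k : Fin N, j < k → x j.val < x k.val)
    (hlast : x (N - 1) = M) :
    ∃ p : Polynomial ℂ, p.degree ≤ ((2 * N - 1 : ℕ) : WithBot ℕ) ∧
      ∀ u : ℂ,
        FF a b M N z (Function.update w ⟨M - 1, Nat.sub_lt hM Nat.one_pos⟩ u) x
          = p.eval u := by
  suffices h : PolyLe (2 * N - 1) (fun u =>
      FF a b M N z (Function.update w ⟨M - 1, Nat.sub_lt hM Nat.one_pos⟩ u) x) by
    obtain ⟨p, hp, h⟩ := h
    exact ⟨p, Polynomial.natDegree_le_iff_degree_le.mp hp, h⟩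
  unfold FF
  refine ((PolyLe.const _).mul (PolyLe.sum _ (d := 2 * N - 1) fun σ =>
    PolyLe.sum _ fun τ => ?_)).mono (by omega)
  refine PolyLe.mono (((PolyLe.const _).mul
    (PolyLe.prod _ fun k => PolyLe.prod _ fun j => PolyLe.lin w _ j _ _)).mul
    (PolyLe.prod _ fun k => PolyLe.prod _ fun j => PolyLe.lin' w _ j _ _) |>.mul
    (PolyLe.prod _ fun k => PolyLe.prod _ fun j => PolyLe.lin w _ j _ _)) ?_
  have h2 : ∀ k : Fin N, ¬ (M - 1 + 1 < x k.val) := fun k => by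
    have := hxM k
    omega
  have h3 : ∑ k : Fin N, (if x k.val ≤ M - 1 then 1 else 0) ≤ N - 1 := by
    rw [Finset.sum_boole]
    have : (Finset.univ.filter fun k : Fin N => x k.val ≤ M - 1) ⊆
        Finset.univ.erase (⟨N - 1, by omega⟩ : Fin N) := by
      intro k hk
      simp only [Finset.mem_filter, Finset.mem_univ, true_and] at hk
      simp only [Finset.mem_erase, Finset.mem_univ, and_true]
      rintro rfl
      simp only [hlast] at hk
      omega
    simpa using Finset.card_le_card this
  simp only [Finset.sum_ite_eq', Finset.mem_filter, Finset.mem_univ, true_and, h2, if_true,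
    if_false, Finset.sum_const, Finset.card_univ, Fintype.card_fin, smul_eq_mul]
  omega
end

section
/- Suppose x_N = M. Then, setting w_M = a²z_N², the following recursion holds: F_{M,N}(z_1,…,z_N|w_1,…,w_{M−1},a²z_N²|x_1,…,x_N) = (a²−a⁻²)(ba⁻¹z_N⁻¹−b⁻¹az_N) ∏_{j=1}^{N}(a³z_N²z_j−a⁻¹z_j⁻¹) ∏_{j=1}^{N−1}(a³z_N²z_j⁻¹−a⁻¹z_j) ∏_{j=1}^{M−1}(az_N⁻¹w_j−a⁻¹z_N)(az_N⁻¹−a⁻¹z_N w_j) × F_{M−1,N−1}(z_1,…,z_{N−1}|w_1,…,w_{M−1}|x_1,…,x_{N−1}). -/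
open Finset

noncomputable def TT (a b : ℂ) (M N : ℕ) (z : Fin N → ℂ) (w : Fin M → ℂ) (x : ℕ → ℕ)
    (σ : Equiv.Perm (Fin N)) (τ : Fin N → Bool) : ℂ :=
    (∏ j, (z j ^ (2 * eps τ j) - z j ^ (-(2 * eps τ j)))⁻¹) *
    (∏ p ∈ Finset.univ.filter (fun p : Fin N × Fin N => p.1 < p.2),
      pairFactor a (z (σ p.1)) (z (σ p.2)) (eps τ (σ p.1)) (eps τ (σ p.2))) *
    (∏ k, (b * a⁻¹ * z (σ k) ^ (-(eps τ (σ k))) - b⁻¹ * a * z (σ k) ^ (eps τ (σ k)))) *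
    (∏ k, ∏ j : Fin M, (a * z (σ k) ^ (-(eps τ (σ k))) - a⁻¹ * z (σ k) ^ (eps τ (σ k)) * w j)) *
    (∏ k : Fin N, ∏ j ∈ Finset.univ.filter (fun j : Fin M => (j : ℕ) + 1 < x k.val),
      (a * z (σ k) ^ (-(eps τ (σ k))) * w j - a⁻¹ * z (σ k) ^ (eps τ (σ k)))) *
    (∏ k : Fin N, ∏ j ∈ Finset.univ.filter (fun j : Fin M => x k.val ≤ (j : ℕ)),
      (a * z (σ k) ^ (eps τ (σ k)) - a⁻¹ * z (σ k) ^ (-(eps τ (σ k))) * w j))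

def EE {N : ℕ} (σ : Equiv.Perm (Fin N)) : Equiv.Perm (Fin (N + 1)) :=
  finSuccEquivLast.trans (σ.optionCongr.trans finSuccEquivLast.symm)

lemma EE_cast {N : ℕ} (σ : Equiv.Perm (Fin N)) (i : Fin N) :
    EE σ (Fin.castSucc i) = Fin.castSucc (σ i) := by simp [EE]

lemma EE_last {N : ℕ} (σ : Equiv.Perm (Fin N)) : EE σ (Fin.last N) = Fin.last N := by simp [EE]

lemma EE_inj {N : ℕ} : Function.Injective (EE (N := N)) := by
  intro s t h
  ext i
  have := congrArg (fun f => f (Fin.castSucc i)) h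
  simp only [EE_cast] at this
  rw [Fin.castSucc_injective _ this]

lemma EE_surj {N : ℕ} (ρ : Equiv.Perm (Fin (N + 1))) (h : ρ (Fin.last N) = Fin.last N) :
    ∃ σ, EE σ = ρ := by
  have hne : ∀ i : Fin N, ρ (Fin.castSucc i) ≠ Fin.last N := by
    intro i hi
    exact (Fin.castSucc_lt_last i).ne (ρ.injective (hi.trans h.symm))
  have hinj : Function.Injective (fun i : Fin N => (ρ (Fin.castSucc i)).castPred (hne i)) := by
    intro i j hij
    have := congrArg Fin.castSucc hij
    simp only [Fin.castSucc_castPred] at this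
    exact Fin.castSucc_injective _ (ρ.injective this)
  refine ⟨Equiv.ofBijective _ (Finite.injective_iff_bijective.mp hinj), ?_⟩
  ext i
  induction i using Fin.lastCases with
  | last => rw [EE_last, h]
  | cast i => rw [EE_cast]; simp

lemma TT_zero_false (a b : ℂ) (M N : ℕ)
    (z : Fin (N + 1) → ℂ) (w : Fin (M + 1) → ℂ) (x : ℕ → ℕ)
    (ha : a ≠ 0) (hz : ∀ j, z j ≠ 0)
    (hw : w (Fin.last M) = a ^ 2 * z (Fin.last N) ^ 2)
    (σ : Equiv.Perm (Fin (N + 1))) (τ : Fin (N + 1) → Bool) (hτ : τ (Fin.last N) = false) :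
    TT a b (M + 1) (N + 1) z w x σ τ = 0 := by
  unfold TT
  have h : (∏ k, ∏ j : Fin (M + 1), (a * z (σ k) ^ (-(eps τ (σ k))) -
      a⁻¹ * z (σ k) ^ (eps τ (σ k)) * w j)) = 0 := by
    apply Finset.prod_eq_zero (Finset.mem_univ (σ.symm (Fin.last N)))
    apply Finset.prod_eq_zero (Finset.mem_univ (Fin.last M))
    have := hz (Fin.last N)
    simp [eps, hτ, hw]
    field_simp
    ring
  rw [h]; ring

lemma TT_zero_perm (a b : ℂ) (M N : ℕ)
    (z : Fin (N + 1) → ℂ) (w : Fin (M + 1) → ℂ) (x : ℕ → ℕ)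
    (ha : a ≠ 0) (hz : ∀ j, z j ≠ 0)
    (hw : w (Fin.last M) = a ^ 2 * z (Fin.last N) ^ 2)
    (hmono : ∀ j k : Fin (N + 1), j < k → x j.val < x k.val)
    (hlast : x N = M + 1)
    (σ : Equiv.Perm (Fin (N + 1))) (τ : Fin (N + 1) → Bool) (hτ : τ (Fin.last N) = true)
    (hσ : σ (Fin.last N) ≠ Fin.last N) :
    TT a b (M + 1) (N + 1) z w x σ τ = 0 := by
  unfold TT
  have hlt : σ.symm (Fin.last N) < Fin.last N := by
    rw [Fin.lt_last_iff_ne_last]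
    intro h
    apply hσ
    have h3 := congrArg σ h
    rw [Equiv.apply_symm_apply] at h3
    exact h3.symm
  have h2 := hmono _ _ hlt
  rw [Fin.val_last, hlast] at h2
  have h : (∏ k : Fin (N + 1), ∏ j ∈ Finset.univ.filter
      (fun j : Fin (M + 1) => x k.val ≤ (j : ℕ)),
      (a * z (σ k) ^ (eps τ (σ k)) - a⁻¹ * z (σ k) ^ (-(eps τ (σ k))) * w j)) = 0 := by
    apply Finset.prod_eq_zero (Finset.mem_univ (σ.symm (Fin.last N)))
    apply Finset.prod_eq_zero (i := Fin.last M)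
    · simp; omega
    have := hz (Fin.last N)
    simp [eps, hτ, hw]
    field_simp
    ring
  rw [h]; ring

lemma eps_cast {N : ℕ} (τ : Fin N → Bool) (i : Fin N) :
    eps (Fin.snoc τ true : Fin (N + 1) → Bool) (Fin.castSucc i) = eps τ i := by
  simp [eps]

lemma eps_last {N : ℕ} (τ : Fin N → Bool) :
    eps (Fin.snoc τ true : Fin (N + 1) → Bool) (Fin.last N) = 1 := by
  simp [eps]

lemma key_id (a Z u : ℂ) (t : ℤ) (ht : t = 1 ∨ t = -1) (ha : a ≠ 0) (hZ : Z ≠ 0) (hu : u ≠ 0)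
    (h1 : u ^ 2 * Z ^ 2 ≠ 1) (h2 : u ^ 2 ≠ Z ^ 2) :
    pairFactor a u Z t 1 * (a * u ^ (-t) - a⁻¹ * u ^ t * (a ^ 2 * Z ^ 2)) *
      (a * u ^ t - a⁻¹ * u ^ (-t) * (a ^ 2 * Z ^ 2)) =
    (a ^ 3 * Z ^ 2 * u - a⁻¹ * u⁻¹) * (a ^ 3 * Z ^ 2 * u⁻¹ - a⁻¹ * u) := by
  have d1 : u * Z - u⁻¹ * Z⁻¹ ≠ 0 := by
    intro h
    apply h1
    field_simp at h
    linear_combination h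
  have d2 : u⁻¹ * Z - u * Z⁻¹ ≠ 0 := by
    intro h
    apply h2
    field_simp at h
    linear_combination -h
  have d1' : u⁻¹ * Z⁻¹ - u * Z ≠ 0 := fun h => d1 (by linear_combination -h)
  have e : pairFactor a u Z t 1 = (a ^ 2 * u * Z - (a ^ 2)⁻¹ * u⁻¹ * Z⁻¹) *
     (a ^ 2 * u⁻¹ * Z - (a ^ 2)⁻¹ * u * Z⁻¹) / ((u * Z - u⁻¹ * Z⁻¹) * (u⁻¹ * Z - u * Z⁻¹)) := by
    unfold pairFactor
    rcases ht with rfl | rfl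
    · simp [zpow_neg]
    · simp [zpow_neg]; norm_cast; ring
  have f : (a * u ^ (-t) - a⁻¹ * u ^ t * (a ^ 2 * Z ^ 2)) *
      (a * u ^ t - a⁻¹ * u ^ (-t) * (a ^ 2 * Z ^ 2)) =
      a ^ 2 * Z ^ 2 * ((u * Z - u⁻¹ * Z⁻¹) * (u⁻¹ * Z - u * Z⁻¹)) := by
    rcases ht with rfl | rfl
    · simp; field_simp; ring
    · simp; field_simp; ring
  rw [mul_assoc, f, e, div_mul_eq_mul_div, div_eq_iff (mul_ne_zero d1 d2)]
  have g : (a ^ 2 * u * Z - (a ^ 2)⁻¹ * u⁻¹ * Z⁻¹) *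
     (a ^ 2 * u⁻¹ * Z - (a ^ 2)⁻¹ * u * Z⁻¹) * (a ^ 2 * Z ^ 2) =
    (a ^ 3 * Z ^ 2 * u - a⁻¹ * u⁻¹) * (a ^ 3 * Z ^ 2 * u⁻¹ - a⁻¹ * u) := by
    field_simp
  rw [← g]; ring

lemma TT_main (a b : ℂ) (M N : ℕ)
    (z : Fin (N + 1) → ℂ) (w : Fin (M + 1) → ℂ) (x : ℕ → ℕ)
    (ha : a ≠ 0) (hz : ∀ j, z j ≠ 0) (hz4 : ∀ j, z j ^ 4 ≠ 1)
    (hzz : ∀ j k, j ≠ k → z j ^ 2 * z k ^ 2 ≠ 1)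
    (hzz' : ∀ j k, j ≠ k → z j ^ 2 ≠ z k ^ 2)
    (hw : w (Fin.last M) = a ^ 2 * z (Fin.last N) ^ 2)
    (hmono : ∀ j k : Fin (N + 1), j < k → x j.val < x k.val)
    (hlast : x N = M + 1)
    (σ : Equiv.Perm (Fin N)) (τ : Fin N → Bool) :
    TT a b (M + 1) (N + 1) z w x (EE σ) (Fin.snoc τ true) =
      ((b * a⁻¹ * (z (Fin.last N))⁻¹ - b⁻¹ * a * z (Fin.last N)) * (-(a * z (Fin.last N))) *
      (∏ j : Fin N, ((a ^ 3 * z (Fin.last N) ^ 2 * z (Fin.castSucc j)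
          - a⁻¹ * (z (Fin.castSucc j))⁻¹) *
        (a ^ 3 * z (Fin.last N) ^ 2 * (z (Fin.castSucc j))⁻¹ - a⁻¹ * z (Fin.castSucc j)))) *
      (∏ j : Fin M,
        ((a * (z (Fin.last N))⁻¹ * w (Fin.castSucc j) - a⁻¹ * z (Fin.last N)) *
         (a * (z (Fin.last N))⁻¹ - a⁻¹ * z (Fin.last N) * w (Fin.castSucc j))))) *
      TT a b M N (fun j => z (Fin.castSucc j)) (fun j => w (Fin.castSucc j)) x σ τ := by
  have hx : ∀ k : Fin N, x k.val ≤ M := by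
    intro k
    have := hmono (Fin.castSucc k) (Fin.last N) (Fin.castSucc_lt_last k)
    simp [hlast] at this
    omega
  set Z := z (Fin.last N) with hZdef
  have hZ : Z ≠ 0 := hz _
  rw [← Equiv.prod_comp σ (fun j => ((a ^ 3 * Z ^ 2 * z (Fin.castSucc j)
          - a⁻¹ * (z (Fin.castSucc j))⁻¹) *
        (a ^ 3 * Z ^ 2 * (z (Fin.castSucc j))⁻¹ - a⁻¹ * z (Fin.castSucc j))))]
  have hk : ∀ k : Fin N, (a ^ 3 * Z ^ 2 * z (Fin.castSucc (σ k))
          - a⁻¹ * (z (Fin.castSucc (σ k)))⁻¹) *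
        (a ^ 3 * Z ^ 2 * (z (Fin.castSucc (σ k)))⁻¹ - a⁻¹ * z (Fin.castSucc (σ k))) =
      pairFactor a (z (Fin.castSucc (σ k))) Z (eps τ (σ k)) 1 *
      (a * z (Fin.castSucc (σ k)) ^ (-(eps τ (σ k)))
        - a⁻¹ * z (Fin.castSucc (σ k)) ^ (eps τ (σ k)) * (a ^ 2 * Z ^ 2)) *
      (a * z (Fin.castSucc (σ k)) ^ (eps τ (σ k))
        - a⁻¹ * z (Fin.castSucc (σ k)) ^ (-(eps τ (σ k))) * (a ^ 2 * Z ^ 2)) := by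
    intro k
    rw [key_id a Z _ _ _ ha hZ (hz _) (hzz _ _ (Fin.castSucc_lt_last _).ne)
      (hzz' _ _ (Fin.castSucc_lt_last _).ne)]
    unfold eps
    split_ifs <;> simp
  simp only [hk]
  have hd : (Z ^ (2:ℤ) - Z ^ (-2:ℤ))⁻¹ * (a * Z⁻¹ - a⁻¹ * Z * (a ^ 2 * Z ^ 2)) = -(a * Z) := by
    have h4 : Z ^ (2:ℤ) - Z ^ (-2:ℤ) ≠ 0 := by
      intro h
      apply hz4 (Fin.last N)
      rw [← hZdef]
      rw [zpow_neg, sub_eq_zero] at h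
      norm_cast at h
      field_simp at h
      linear_combination h
    rw [inv_mul_eq_iff_eq_mul₀ h4, zpow_neg]
    norm_cast
    field_simp
    ring
  rw [← hd]
  unfold TT
  have hlt : ∀ k : Fin N, ¬ Fin.last N < Fin.castSucc k := fun k => (Fin.castSucc_lt_last k).not_gt
  have hx2 : ∀ k : Fin N, ¬ (M + 1 < x k.val) := fun k => by have := hx k; omega
  have hj : ∀ j : Fin M, ¬ (M + 1 ≤ j.val) := fun j => by omega
  simp only [Finset.prod_filter, Fintype.prod_prod_type, Fin.prod_univ_castSucc, EE_cast, EE_last,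
    eps_cast, eps_last, Fin.castSucc_lt_castSucc_iff, Fin.castSucc_lt_last, hlt, if_true, if_false,
    Fin.val_castSucc, Fin.val_last, hlast, hx, hx2, hw, lt_irrefl, hj, ← hZdef,
    Finset.prod_mul_distrib, Finset.prod_const_one, mul_one, one_mul, zpow_one, zpow_neg_one,
    Fin.is_lt, add_lt_add_iff_right]
  have hM : ¬ (M + 1 ≤ M) := by omega
  simp only [hM, if_false, mul_one, one_mul]
  ring

/-- Property (4), first case, for `F`: when `x_N = M` (sizes re-parametrized as
`M+1` sites and `N+1` particles, so `z (Fin.last N)` is `z_N` and `x N = M+1`),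
setting `w_M = a²z_N²` freezes the boundary and yields the recursion to
`F_{M-1,N-1}`. -/
theorem F_recursion_top (a b : ℂ) (M N : ℕ)
    (z : Fin (N + 1) → ℂ) (w : Fin (M + 1) → ℂ) (x : ℕ → ℕ)
    (ha : a ≠ 0) (hb : b ≠ 0) (hz : ∀ j, z j ≠ 0) (hz4 : ∀ j, z j ^ 4 ≠ 1)
    (hzz : ∀ j k, j ≠ k → z j ^ 2 * z k ^ 2 ≠ 1)
    (hzz' : ∀ j k, j ≠ k → z j ^ 2 ≠ z k ^ 2)
    (hx1 : ∀ k : Fin (N + 1), 1 ≤ x k.val) (hxM : ∀ k : Fin (N + 1), x k.val ≤ M + 1)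
    (hmono : ∀ j k : Fin (N + 1), j < k → x j.val < x k.val)
    (hlast : x N = M + 1) :
    FF a b (M + 1) (N + 1) z
      (Function.update w (Fin.last M) (a ^ 2 * z (Fin.last N) ^ 2)) x
    = (a ^ (2:ℤ) - a ^ (-2:ℤ)) *
      (b * a⁻¹ * (z (Fin.last N))⁻¹ - b⁻¹ * a * z (Fin.last N)) *
      (∏ j : Fin (N + 1), (a ^ 3 * z (Fin.last N) ^ 2 * z j - a⁻¹ * (z j)⁻¹)) *
      (∏ j : Fin N,
        (a ^ 3 * z (Fin.last N) ^ 2 * (z (Fin.castSucc j))⁻¹ - a⁻¹ * z (Fin.castSucc j))) *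
      (∏ j : Fin M,
        ((a * (z (Fin.last N))⁻¹ * w (Fin.castSucc j) - a⁻¹ * z (Fin.last N)) *
         (a * (z (Fin.last N))⁻¹ - a⁻¹ * z (Fin.last N) * w (Fin.castSucc j)))) *
      FF a b M N (fun j => z (Fin.castSucc j)) (fun j => w (Fin.castSucc j)) x := by
  have hFF : ∀ (M N : ℕ) (z : Fin N → ℂ) (w : Fin M → ℂ), FF a b M N z w x =
      (a ^ (2:ℤ) - a ^ (-2:ℤ)) ^ N *
      (∏ j, (-(a ^ (2:ℤ) * z j ^ (2:ℤ)) + a ^ (-2:ℤ) * z j ^ (-2:ℤ))) *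
      ∑ σ : Equiv.Perm (Fin N), ∑ τ : Fin N → Bool, TT a b M N z w x σ τ :=
    fun _ _ _ _ => rfl
  rw [hFF, hFF]
  set w' := Function.update w (Fin.last M) (a ^ 2 * z (Fin.last N) ^ 2) with hw'
  have hwl : w' (Fin.last M) = a ^ 2 * z (Fin.last N) ^ 2 := by simp [hw']
  have hwc : ∀ j : Fin M, w (Fin.castSucc j) = w' (Fin.castSucc j) := by
    intro j
    rw [hw', Function.update_of_ne (Fin.castSucc_lt_last j).ne]
  simp only [hwc]
  have hsum : ∑ σ : Equiv.Perm (Fin (N + 1)), ∑ τ : Fin (N + 1) → Bool,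
      TT a b (M + 1) (N + 1) z w' x σ τ =
      ∑ σ : Equiv.Perm (Fin N), ∑ τ : Fin N → Bool,
      TT a b (M + 1) (N + 1) z w' x (EE σ) (Fin.snoc τ true) := by
    symm
    apply Finset.sum_of_injOn EE (EE_inj.injOn) (by simp)
    · intro ρ _ hρ
      apply Finset.sum_eq_zero
      intro τ _
      cases hτ : τ (Fin.last N) with
      | false => exact TT_zero_false a b M N z w' x ha hz hwl ρ τ hτ
      | true =>
        refine TT_zero_perm a b M N z w' x ha hz hwl hmono hlast ρ τ hτ fun h => hρ ?_
        obtain ⟨σ, hσ⟩ := EE_surj ρ h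
        exact ⟨σ, by simp, hσ⟩
    · intro σ _
      apply Finset.sum_of_injOn (fun τ : Fin N → Bool => (Fin.snoc τ true : Fin (N + 1) → Bool))
      · intro s _ t _ h
        funext i
        simpa using congrFun h (Fin.castSucc i)
      · simp
      · intro τ _ hτ
        apply TT_zero_false a b M N z w' x ha hz hwl
        by_contra h
        apply hτ
        refine ⟨fun i => τ (Fin.castSucc i), by simp, ?_⟩
        funext i
        induction i using Fin.lastCases with
        | last => simpa using h
        | cast i => simp
      · intro _ _; rfl
  rw [hsum]
  simp only [TT_main a b M N z w' x ha hz hz4 hzz hzz' hwl hmono hlast, ← Finset.mul_sum]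
  rw [Fin.prod_univ_castSucc, Fin.prod_univ_castSucc, pow_succ]
  have hZ := hz (Fin.last N)
  have hl : a ^ 3 * z (Fin.last N) ^ 2 * z (Fin.last N) - a⁻¹ * (z (Fin.last N))⁻¹ =
      (-(a ^ (2:ℤ) * z (Fin.last N) ^ (2:ℤ)) + a ^ (-2:ℤ) * z (Fin.last N) ^ (-2:ℤ)) *
        (-(a * z (Fin.last N))) := by
    rw [zpow_neg, zpow_neg]
    norm_cast
    field_simp
    ring
  rw [hl]
  simp only [Finset.prod_mul_distrib]
  generalize (∑ σ : Equiv.Perm (Fin N), ∑ τ : Fin N → Bool, TT a b M N _ _ x σ τ) = S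
  ring
end

section
/- Suppose x_N ≠ M (that is, x_N < M). Then the following factorization holds: F_{M,N}(z_1,…,z_N|w_1,…,w_M|x_1,…,x_N) = ∏_{j=1}^N (az_j⁻¹−a⁻¹z_j w_M)(az_j−a⁻¹z_j⁻¹w_M) × F_{M−1,N}(z_1,…,z_N|w_1,…,w_{M−1}|x_1,…,x_N). -/
open Finset

/-- Property (4), second case, for `F`: when `x_N ≠ M` (i.e. `x_N < M`; sizes
re-parametrized as `M+1` sites and `N+1` particles, so the condition reads
`x N ≤ M`), the `w_M`-dependence factors out of `F_{M,N}`. -/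
theorem F_factorization (a b : ℂ) (M N : ℕ)
    (z : Fin (N + 1) → ℂ) (w : Fin (M + 1) → ℂ) (x : ℕ → ℕ)
    (ha : a ≠ 0) (hb : b ≠ 0) (hz : ∀ j, z j ≠ 0) (hz4 : ∀ j, z j ^ 4 ≠ 1)
    (hzz : ∀ j k, j ≠ k → z j ^ 2 * z k ^ 2 ≠ 1)
    (hzz' : ∀ j k, j ≠ k → z j ^ 2 ≠ z k ^ 2)
    (hx1 : ∀ k : Fin (N + 1), 1 ≤ x k.val) (hxM : ∀ k : Fin (N + 1), x k.val ≤ M + 1)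
    (hmono : ∀ j k : Fin (N + 1), j < k → x j.val < x k.val)
    (hlast : x N ≤ M) :
    FF a b (M + 1) (N + 1) z w x
    = (∏ j : Fin (N + 1),
        ((a * (z j)⁻¹ - a⁻¹ * z j * w (Fin.last M)) *
         (a * z j - a⁻¹ * (z j)⁻¹ * w (Fin.last M)))) *
      FF a b M (N + 1) z (fun j => w (Fin.castSucc j)) x := by
  have hxle : ∀ k : Fin (N + 1), x k.val ≤ M := by
    intro k
    rcases eq_or_ne k (Fin.last N) with h | h
    · subst h
      simpa using hlast
    · have h1 := hmono k (Fin.last N) (lt_of_le_of_ne (Fin.le_last k) h)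
      simp only [Fin.val_last] at h1
      omega
  -- the factor carried by the last site is the same for every summand
  have key : ∀ (σ : Equiv.Perm (Fin (N + 1))) (τ : Fin (N + 1) → Bool),
      (∏ j : Fin (N + 1),
        ((a * (z j)⁻¹ - a⁻¹ * z j * w (Fin.last M)) *
         (a * z j - a⁻¹ * (z j)⁻¹ * w (Fin.last M)))) =
      (∏ k, (a * z (σ k) ^ (-(eps τ (σ k)))
          - a⁻¹ * z (σ k) ^ (eps τ (σ k)) * w (Fin.last M))) *
      (∏ k, (a * z (σ k) ^ (eps τ (σ k))
          - a⁻¹ * z (σ k) ^ (-(eps τ (σ k))) * w (Fin.last M))) := by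
    intro σ τ
    rw [← Finset.prod_mul_distrib, ← Equiv.prod_comp σ]
    refine Finset.prod_congr rfl fun k _ => ?_
    unfold eps
    split_ifs
    · simp
    · simp
      ring
  unfold FF
  refine Eq.trans ?_ (mul_left_comm _ _ _).symm
  refine congrArg _ ?_
  rw [Finset.mul_sum]
  refine Finset.sum_congr rfl fun σ _ => ?_
  rw [Finset.mul_sum]
  refine Finset.sum_congr rfl fun τ _ => ?_
  rw [key σ τ]
  have e1 : ∀ f : Fin (N + 1) → Fin (M + 1) → ℂ,
      (∏ k : Fin (N + 1), ∏ j : Fin (M + 1), f k j) =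
      (∏ k, ∏ j : Fin M, f k j.castSucc) * ∏ k, f k (Fin.last M) := by
    intro f
    rw [← Finset.prod_mul_distrib]
    exact Finset.prod_congr rfl fun k _ => Fin.prod_univ_castSucc _
  have e2 : ∀ f : Fin (N + 1) → Fin (M + 1) → ℂ,
      (∏ k : Fin (N + 1),
        ∏ j ∈ Finset.univ.filter (fun j : Fin (M + 1) => (j : ℕ) + 1 < x k.val), f k j) =
      (∏ k : Fin (N + 1),
        ∏ j ∈ Finset.univ.filter (fun j : Fin M => (j : ℕ) + 1 < x k.val), f k j.castSucc) := by
    intro f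
    refine Finset.prod_congr rfl fun k _ => ?_
    have h : ¬ (M + 1 < x k.val) := by have := hxle k; omega
    rw [Finset.prod_filter, Finset.prod_filter, Fin.prod_univ_castSucc]
    simp [h]
  have e3 : ∀ f : Fin (N + 1) → Fin (M + 1) → ℂ,
      (∏ k : Fin (N + 1),
        ∏ j ∈ Finset.univ.filter (fun j : Fin (M + 1) => x k.val ≤ (j : ℕ)), f k j) =
      (∏ k : Fin (N + 1),
        ∏ j ∈ Finset.univ.filter (fun j : Fin M => x k.val ≤ (j : ℕ)), f k j.castSucc) *
      ∏ k, f k (Fin.last M) := by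
    intro f
    rw [← Finset.prod_mul_distrib]
    refine Finset.prod_congr rfl fun k _ => ?_
    rw [Finset.prod_filter, Finset.prod_filter, Fin.prod_univ_castSucc]
    simp [hxle k]
  rw [e1, e2, e3]
  ring
end

section
/- Suppose x̄_N = M. Then, setting w_M = a⁻²z_N⁻², the following recursion holds: F̄_{M,N}(z_1,…,z_N|w_1,…,w_{M−1},a⁻²z_N⁻²|x̄_1,…,x̄_N) = (a²−a⁻²)(baz_N−b⁻¹a⁻¹z_N⁻¹) ∏_{j=1}^{N}(az_j−a⁻³z_j⁻¹z_N⁻²) ∏_{j=1}^{N−1}(az_j⁻¹−a⁻³z_j z_N⁻²) ∏_{j=1}^{M−1}(az_N⁻¹−a⁻¹z_N w_j)(az_N⁻¹w_j−a⁻¹z_N) × F̄_{M−1,N−1}(z_1,…,z_{N−1}|w_1,…,w_{M−1}|x̄_1,…,x̄_{N−1}). -/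
open Finset

noncomputable def Sterm (a b : ℂ) (M N : ℕ) (z : Fin N → ℂ) (w : Fin M → ℂ) (x : ℕ → ℕ)
    (σ : Equiv.Perm (Fin N)) (τ : Fin N → Bool) : ℂ :=
    (∏ j, (z j ^ (2 * eps τ j) - z j ^ (-(2 * eps τ j)))⁻¹) *
    (∏ p ∈ Finset.univ.filter (fun p : Fin N × Fin N => p.1 < p.2),
      pairFactor a (z (σ p.1)) (z (σ p.2)) (eps τ (σ p.1)) (eps τ (σ p.2))) *
    (∏ k, (b * a * z (σ k) ^ (eps τ (σ k)) - b⁻¹ * a⁻¹ * z (σ k) ^ (-(eps τ (σ k))))) *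
    (∏ k, ∏ j : Fin M, (a * z (σ k) ^ (-(eps τ (σ k))) * w j - a⁻¹ * z (σ k) ^ (eps τ (σ k)))) *
    (∏ k : Fin N, ∏ j ∈ Finset.univ.filter (fun j : Fin M => (j : ℕ) + 1 < x k.val),
      (a * z (σ k) ^ (-(eps τ (σ k))) - a⁻¹ * z (σ k) ^ (eps τ (σ k)) * w j)) *
    (∏ k : Fin N, ∏ j ∈ Finset.univ.filter (fun j : Fin M => x k.val ≤ (j : ℕ)),
      (a * z (σ k) ^ (eps τ (σ k)) * w j - a⁻¹ * z (σ k) ^ (-(eps τ (σ k)))))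

def permE (N : ℕ) : Equiv.Perm (Fin (N+1)) ≃ Option (Fin N) × Equiv.Perm (Fin N) :=
  ((finSuccEquivLast (n := N)).permCongr).trans Equiv.Perm.decomposeOption

theorem permE_none_last {N : ℕ} (π : Equiv.Perm (Fin N)) :
    (permE N).symm (none, π) (Fin.last N) = Fin.last N := by
  simp [permE]

theorem permE_none_castSucc {N : ℕ} (π : Equiv.Perm (Fin N)) (i : Fin N) :
    (permE N).symm (none, π) (Fin.castSucc i) = Fin.castSucc (π i) := by
  simp [permE]

theorem permE_some_last {N : ℕ} (π : Equiv.Perm (Fin N)) (i : Fin N) :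
    (permE N).symm (some i, π) (Fin.last N) ≠ Fin.last N := by
  simp [permE]

theorem eps_snoc_last {N : ℕ} (τ : Fin N → Bool) (t : Bool) :
    eps (Fin.snoc τ t : Fin (N+1) → Bool) (Fin.last N) = if t then 1 else -1 := by
  simp [eps]

theorem eps_snoc_castSucc {N : ℕ} (τ : Fin N → Bool) (t : Bool) (i : Fin N) :
    eps (Fin.snoc τ t : Fin (N+1) → Bool) (Fin.castSucc i) = eps τ i := by
  simp [eps]

theorem prod_pairs {N : ℕ} (f : Fin (N+1) → Fin (N+1) → ℂ) :
    (∏ p ∈ Finset.univ.filter (fun p : Fin (N+1) × Fin (N+1) => p.1 < p.2), f p.1 p.2) =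
    (∏ p ∈ Finset.univ.filter (fun p : Fin N × Fin N => p.1 < p.2),
      f (Fin.castSucc p.1) (Fin.castSucc p.2)) * ∏ i : Fin N, f (Fin.castSucc i) (Fin.last N) := by
  rw [Finset.prod_filter, Finset.prod_filter, Fintype.prod_prod_type, Fintype.prod_prod_type,
    Fin.prod_univ_castSucc]
  simp only [Fin.prod_univ_castSucc, Finset.prod_mul_distrib, Fin.castSucc_lt_castSucc_iff,
    Fin.castSucc_lt_last, if_true, lt_irrefl, if_false, mul_one]
  rw [Finset.prod_eq_one (s := univ) (f := fun i : Fin N =>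
    if Fin.last N < Fin.castSucc i then f (Fin.last N) (Fin.castSucc i) else 1)]
  · ring
  · intro i _
    rw [if_neg (Fin.castSucc_lt_last i).not_gt]

theorem pair_id (a Z Z' : ℂ) (t : ℤ) (ht : t = 1 ∨ t = -1) (ha : a ≠ 0) (hZ : Z ≠ 0) (hZ' : Z' ≠ 0)
    (h1 : Z ^ 2 * Z' ^ 2 ≠ 1) (h2 : Z ^ 2 ≠ Z' ^ 2) :
    pairFactor a Z Z' t 1 *
      ((a * Z ^ (-t) * (a ^ (-2:ℤ) * Z' ^ (-2:ℤ)) - a⁻¹ * Z ^ t) *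
       (a * Z ^ t * (a ^ (-2:ℤ) * Z' ^ (-2:ℤ)) - a⁻¹ * Z ^ (-t))) =
    (a * Z - a ^ (-3:ℤ) * Z⁻¹ * Z' ^ (-2:ℤ)) * (a * Z⁻¹ - a ^ (-3:ℤ) * Z * Z' ^ (-2:ℤ)) := by
  have e2 : ∀ y : ℂ, y ^ (-2:ℤ) = (y^2)⁻¹ := fun y => by rw [zpow_neg]; norm_cast
  have e3 : ∀ y : ℂ, y ^ (-3:ℤ) = (y^3)⁻¹ := fun y => by rw [zpow_neg]; norm_cast
  have e2' : ∀ y : ℂ, y ^ (2:ℤ) = y^2 := fun y => by norm_cast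
  have d1 : Z * Z' - Z⁻¹ * Z'⁻¹ ≠ 0 := by
    intro h
    field_simp at h
    exact h1 (by linear_combination h)
  have d2 : Z⁻¹ * Z' - Z * Z'⁻¹ ≠ 0 := by
    intro h
    field_simp at h
    exact h2 (by linear_combination -h)
  have key : (Z * Z' - Z⁻¹ * Z'⁻¹) * (Z⁻¹ * Z' - Z * Z'⁻¹) ≠ 0 := mul_ne_zero d1 d2
  have d2' : Z * Z'⁻¹ - Z⁻¹ * Z' ≠ 0 := fun h => d2 (by linear_combination -h)
  rcases ht with rfl | rfl
  · simp only [pairFactor, e2, e3, e2', zpow_one, zpow_neg_one, neg_neg]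
    rw [div_mul_eq_mul_div, div_eq_iff key]
    field_simp
    ring
  · simp only [pairFactor, e2, e3, e2', zpow_one, zpow_neg_one, neg_neg]
    rw [div_mul_eq_mul_div, div_eq_iff (by rw [mul_comm]; exact key)]
    field_simp
    ring

theorem last_id (a Z : ℂ) (ha : a ≠ 0) (hZ : Z ≠ 0) (h4 : Z ^ 4 ≠ 1) :
    (-(a ^ (2:ℤ) * Z ^ (2:ℤ)) + a ^ (-2:ℤ) * Z ^ (-2:ℤ)) *
     (Z ^ (2 * (1:ℤ)) - Z ^ (-(2 * (1:ℤ))))⁻¹ *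
      (a * Z ^ (-1:ℤ) * (a ^ (-2:ℤ) * Z ^ (-2:ℤ)) - a⁻¹ * Z ^ (1:ℤ)) =
    a * Z - a ^ (-3:ℤ) * Z⁻¹ * Z ^ (-2:ℤ) := by
  have e2 : ∀ y : ℂ, y ^ (-2:ℤ) = (y^2)⁻¹ := fun y => by rw [zpow_neg]; norm_cast
  have e3 : ∀ y : ℂ, y ^ (-3:ℤ) = (y^3)⁻¹ := fun y => by rw [zpow_neg]; norm_cast
  have e2' : ∀ y : ℂ, y ^ (2:ℤ) = y^2 := fun y => by norm_cast
  have d : Z ^ 2 - (Z^2)⁻¹ ≠ 0 := by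
    intro h
    field_simp at h
    exact h4 (by linear_combination h)
  simp only [mul_one, e2, e3, e2', zpow_one, zpow_neg_one]
  rw [mul_right_comm, ← div_eq_mul_inv, div_eq_iff d]
  field_simp
  ring

theorem zero_id (a Z : ℂ) (ha : a ≠ 0) (hZ : Z ≠ 0) :
    a * Z * (a ^ (-2:ℤ) * Z ^ (-2:ℤ)) - a⁻¹ * Z⁻¹ = 0 := by
  have e2 : ∀ y : ℂ, y ^ (-2:ℤ) = (y^2)⁻¹ := fun y => by rw [zpow_neg]; norm_cast
  simp only [e2]
  field_simp
  ring

theorem eps_cases {N : ℕ} (τ : Fin N → Bool) (j : Fin N) : eps τ j = 1 ∨ eps τ j = -1 := by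
  unfold eps; split <;> simp

theorem Sterm_zero1 (a b : ℂ) (M N : ℕ) (z : Fin (N+1) → ℂ) (w : Fin (M+1) → ℂ) (x : ℕ → ℕ)
    (σ : Equiv.Perm (Fin (N+1))) (τ : Fin (N+1) → Bool) (ha : a ≠ 0) (hz : ∀ j, z j ≠ 0)
    (hw : w (Fin.last M) = a ^ (-2:ℤ) * z (Fin.last N) ^ (-2:ℤ))
    (h : eps τ (Fin.last N) = -1) : Sterm a b (M+1) (N+1) z w x σ τ = 0 := by
  have : (∏ k, ∏ j : Fin (M+1), (a * z (σ k) ^ (-(eps τ (σ k))) * w j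
      - a⁻¹ * z (σ k) ^ (eps τ (σ k)))) = 0 := by
    apply Finset.prod_eq_zero (Finset.mem_univ (σ.symm (Fin.last N)))
    apply Finset.prod_eq_zero (Finset.mem_univ (Fin.last M))
    rw [Equiv.apply_symm_apply, h, hw, neg_neg, zpow_one, zpow_neg_one]
    exact zero_id a _ ha (hz _)
  unfold Sterm
  rw [this]; ring

theorem Sterm_zero2 (a b : ℂ) (M N : ℕ) (z : Fin (N+1) → ℂ) (w : Fin (M+1) → ℂ) (x : ℕ → ℕ)
    (σ : Equiv.Perm (Fin (N+1))) (τ : Fin (N+1) → Bool) (ha : a ≠ 0) (hz : ∀ j, z j ≠ 0)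
    (hw : w (Fin.last M) = a ^ (-2:ℤ) * z (Fin.last N) ^ (-2:ℤ))
    (hx : ∀ k : Fin N, x k.val ≤ M)
    (h : eps τ (Fin.last N) = 1) (hσ : σ (Fin.last N) ≠ Fin.last N) :
    Sterm a b (M+1) (N+1) z w x σ τ = 0 := by
  have : (∏ k : Fin (N+1), ∏ j ∈ Finset.univ.filter (fun j : Fin (M+1) => x k.val ≤ (j : ℕ)),
      (a * z (σ k) ^ (eps τ (σ k)) * w j - a⁻¹ * z (σ k) ^ (-(eps τ (σ k))))) = 0 := by
    apply Finset.prod_eq_zero (Finset.mem_univ (σ.symm (Fin.last N)))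
    apply Finset.prod_eq_zero (i := Fin.last M)
    · rw [Finset.mem_filter]
      refine ⟨Finset.mem_univ _, ?_⟩
      have hne : σ.symm (Fin.last N) ≠ Fin.last N := by
        intro h'
        apply hσ
        rw [Equiv.symm_apply_eq] at h'
        exact h'.symm
      obtain ⟨k, hk⟩ := Fin.exists_castSucc_eq.mpr hne
      rw [← hk]
      simpa using hx k
    · rw [Equiv.apply_symm_apply, h, hw, zpow_one, zpow_neg_one]
      exact zero_id a _ ha (hz _)
  unfold Sterm
  rw [this]; ring

theorem assemble {P1 P2 Q1 Q2 Q3 C R1 R2 R3 R4 A B D L U V W : ℂ}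
    (h : P1 * P2 = Q1 * (Q2 * Q3)) :
    C * (R1 * R2 * (A * Q1) * (B * D) * (W * R4 * (Q2 * L)) * (U * R3) * (V * Q3)) =
    D * (P1 * (C * R2 * L)) * P2 * (R3 * R4) * (R1 * A * B * W * U * V) := by
  linear_combination (-(C * R1 * R2 * A * B * D * W * R4 * L * U * R3 * V)) * h

theorem Sterm_main (a b : ℂ) (M N : ℕ) (z : Fin (N+1) → ℂ) (w : Fin (M+1) → ℂ) (x : ℕ → ℕ)
    (π : Equiv.Perm (Fin N)) (τ : Fin N → Bool) (ha : a ≠ 0) (hz : ∀ j, z j ≠ 0)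
    (hz4 : ∀ j, z j ^ 4 ≠ 1)
    (hzz : ∀ j k, j ≠ k → z j ^ 2 * z k ^ 2 ≠ 1)
    (hzz' : ∀ j k, j ≠ k → z j ^ 2 ≠ z k ^ 2)
    (hw : w (Fin.last M) = a ^ (-2:ℤ) * z (Fin.last N) ^ (-2:ℤ))
    (hx : ∀ k : Fin N, x k.val ≤ M) (hlast : x N = M + 1) :
    (-(a ^ (2:ℤ) * z (Fin.last N) ^ (2:ℤ)) + a ^ (-2:ℤ) * z (Fin.last N) ^ (-2:ℤ)) *
    Sterm a b (M+1) (N+1) z w x ((permE N).symm (none, π)) (Fin.snoc τ true) =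
      (b * a * z (Fin.last N) - b⁻¹ * a⁻¹ * (z (Fin.last N))⁻¹) *
      (∏ j : Fin (N + 1),
        (a * z j - a ^ (-3:ℤ) * (z j)⁻¹ * z (Fin.last N) ^ (-2:ℤ))) *
      (∏ j : Fin N,
        (a * (z (Fin.castSucc j))⁻¹ - a ^ (-3:ℤ) * z (Fin.castSucc j) * z (Fin.last N) ^ (-2:ℤ))) *
      (∏ j : Fin M,
        ((a * (z (Fin.last N))⁻¹ - a⁻¹ * z (Fin.last N) * w (Fin.castSucc j)) *
         (a * (z (Fin.last N))⁻¹ * w (Fin.castSucc j) - a⁻¹ * z (Fin.last N)))) *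
      Sterm a b M N (fun j => z (Fin.castSucc j)) (fun j => w (Fin.castSucc j)) x π τ := by
  have hpair : (∏ j : Fin N,
        (a * z (Fin.castSucc j) - a ^ (-3:ℤ) * (z (Fin.castSucc j))⁻¹ * z (Fin.last N) ^ (-2:ℤ))) *
      (∏ j : Fin N,
        (a * (z (Fin.castSucc j))⁻¹ - a ^ (-3:ℤ) * z (Fin.castSucc j) * z (Fin.last N) ^ (-2:ℤ))) =
      (∏ k : Fin N, pairFactor a (z (Fin.castSucc (π k))) (z (Fin.last N)) (eps τ (π k)) 1) *
      ((∏ k : Fin N, (a * z (Fin.castSucc (π k)) ^ (-(eps τ (π k))) *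
          (a ^ (-2:ℤ) * z (Fin.last N) ^ (-2:ℤ)) - a⁻¹ * z (Fin.castSucc (π k)) ^ (eps τ (π k)))) *
       (∏ k : Fin N, (a * z (Fin.castSucc (π k)) ^ (eps τ (π k)) *
          (a ^ (-2:ℤ) * z (Fin.last N) ^ (-2:ℤ)) -
            a⁻¹ * z (Fin.castSucc (π k)) ^ (-(eps τ (π k)))))) := by
    rw [← Finset.prod_mul_distrib, ← Finset.prod_mul_distrib, ← Finset.prod_mul_distrib,
      ← Equiv.prod_comp π]
    refine Finset.prod_congr rfl fun k _ => ?_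
    have hne : Fin.castSucc (π k) ≠ Fin.last N := (Fin.castSucc_lt_last _).ne
    exact (pair_id a _ _ _ (eps_cases τ _) ha (hz _) (hz _) (hzz _ _ hne) (hzz' _ _ hne)).symm
  have hl := last_id a (z (Fin.last N)) ha (hz _) (hz4 _)
  have hxlt : ∀ k : Fin N, ¬ (M + 1 < x k.val) := fun k => by have := hx k; omega
  have hjlt : ∀ j : Fin M, ¬ (M + 1 ≤ (j : ℕ)) := fun j => by have := j.2; omega
  unfold Sterm
  rw [prod_pairs (fun i j => pairFactor a (z ((permE N).symm (none, π) i))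
    (z ((permE N).symm (none, π) j))
    (eps (Fin.snoc τ true : Fin (N+1) → Bool) ((permE N).symm (none, π) i))
    (eps (Fin.snoc τ true : Fin (N+1) → Bool) ((permE N).symm (none, π) j)))]
  simp only [Finset.prod_filter (s := (Finset.univ : Finset (Fin (M+1)))),
    Finset.prod_filter (s := (Finset.univ : Finset (Fin M)))]
  simp only [Fin.prod_univ_castSucc, permE_none_last, permE_none_castSucc, eps_snoc_last,
    eps_snoc_castSucc, if_true, hw, Fin.val_castSucc, Fin.val_last, hlast, hx, hxlt, hjlt,
    if_false, Finset.prod_mul_distrib, mul_one, Finset.prod_const_one, lt_irrefl,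
    add_lt_add_iff_right, Fin.is_lt, Nat.not_succ_le_self]
  simp only [zpow_one, zpow_neg_one, mul_one] at hl hpair ⊢
  rw [← hl]
  set P1 := (∏ j : Fin N,
        (a * z (Fin.castSucc j) - a ^ (-3:ℤ) * (z (Fin.castSucc j))⁻¹ * z (Fin.last N) ^ (-2:ℤ)))
  set P2 := (∏ j : Fin N,
        (a * (z (Fin.castSucc j))⁻¹ - a ^ (-3:ℤ) * z (Fin.castSucc j) * z (Fin.last N) ^ (-2:ℤ)))
  generalize (∏ k : Fin N, pairFactor a (z (Fin.castSucc (π k))) (z (Fin.last N)) (eps τ (π k)) 1) = Q1 at *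
  generalize (∏ k : Fin N, (a * z (Fin.castSucc (π k)) ^ (-(eps τ (π k))) *
          (a ^ (-2:ℤ) * z (Fin.last N) ^ (-2:ℤ)) - a⁻¹ * z (Fin.castSucc (π k)) ^ (eps τ (π k)))) = Q2 at *
  generalize (∏ k : Fin N, (a * z (Fin.castSucc (π k)) ^ (eps τ (π k)) *
          (a ^ (-2:ℤ) * z (Fin.last N) ^ (-2:ℤ)) -
            a⁻¹ * z (Fin.castSucc (π k)) ^ (-(eps τ (π k))))) = Q3 at *
  generalize (∏ j : Fin N, (z (Fin.castSucc j) ^ (2 * eps τ j) - z (Fin.castSucc j) ^ (-(2 * eps τ j)))⁻¹) = R1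
  generalize (z (Fin.last N) ^ (2:ℤ) - z (Fin.last N) ^ (-2:ℤ))⁻¹ = R2
  generalize (∏ j : Fin M, (a * (z (Fin.last N))⁻¹ - a⁻¹ * z (Fin.last N) * w (Fin.castSucc j))) = R3
  generalize (∏ j : Fin M, (a * (z (Fin.last N))⁻¹ * w (Fin.castSucc j) - a⁻¹ * z (Fin.last N))) = R4
  generalize a ^ (-2:ℤ) = a2 at *
  generalize z (Fin.last N) ^ (-2:ℤ) = z2 at *
  exact assemble hpair

/-- Property (4), first case, for the dual `F̄`: when `x̄_N = M` (sizes
re-parametrized as `M+1` sites and `N+1` particles), setting `w_M = a⁻²z_N⁻²`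
yields the recursion to `F̄_{M-1,N-1}`. -/
theorem FBar_recursion_top (a b : ℂ) (M N : ℕ)
    (z : Fin (N + 1) → ℂ) (w : Fin (M + 1) → ℂ) (x : ℕ → ℕ)
    (ha : a ≠ 0) (hb : b ≠ 0) (hz : ∀ j, z j ≠ 0) (hz4 : ∀ j, z j ^ 4 ≠ 1)
    (hzz : ∀ j k, j ≠ k → z j ^ 2 * z k ^ 2 ≠ 1)
    (hzz' : ∀ j k, j ≠ k → z j ^ 2 ≠ z k ^ 2)
    (hx1 : ∀ k : Fin (N + 1), 1 ≤ x k.val) (hxM : ∀ k : Fin (N + 1), x k.val ≤ M + 1)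
    (hmono : ∀ j k : Fin (N + 1), j < k → x j.val < x k.val)
    (hlast : x N = M + 1) :
    FBar a b (M + 1) (N + 1) z
      (Function.update w (Fin.last M) (a ^ (-2:ℤ) * z (Fin.last N) ^ (-2:ℤ))) x
    = (a ^ (2:ℤ) - a ^ (-2:ℤ)) *
      (b * a * z (Fin.last N) - b⁻¹ * a⁻¹ * (z (Fin.last N))⁻¹) *
      (∏ j : Fin (N + 1),
        (a * z j - a ^ (-3:ℤ) * (z j)⁻¹ * z (Fin.last N) ^ (-2:ℤ))) *
      (∏ j : Fin N,
        (a * (z (Fin.castSucc j))⁻¹ - a ^ (-3:ℤ) * z (Fin.castSucc j) * z (Fin.last N) ^ (-2:ℤ))) *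
      (∏ j : Fin M,
        ((a * (z (Fin.last N))⁻¹ - a⁻¹ * z (Fin.last N) * w (Fin.castSucc j)) *
         (a * (z (Fin.last N))⁻¹ * w (Fin.castSucc j) - a⁻¹ * z (Fin.last N)))) *
      FBar a b M N (fun j => z (Fin.castSucc j)) (fun j => w (Fin.castSucc j)) x := by
  have hx : ∀ k : Fin N, x k.val ≤ M := fun k => by
    have := hmono (Fin.castSucc k) (Fin.last N) (Fin.castSucc_lt_last k)
    simp only [Fin.val_castSucc, Fin.val_last] at this
    omega
  set w' := Function.update w (Fin.last M) (a ^ (-2:ℤ) * z (Fin.last N) ^ (-2:ℤ)) with hw'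
  have hw : w' (Fin.last M) = a ^ (-2:ℤ) * z (Fin.last N) ^ (-2:ℤ) := by simp [hw']
  have hwc : ∀ j : Fin M, w (Fin.castSucc j) = w' (Fin.castSucc j) := fun j => by
    rw [hw', Function.update_of_ne (Fin.castSucc_lt_last j).ne]
  simp only [hwc]
  have hF : ∀ (M N : ℕ) (z : Fin N → ℂ) (w : Fin M → ℂ), FBar a b M N z w x =
    (a ^ (2:ℤ) - a ^ (-2:ℤ)) ^ N *
    (∏ j, (-(a ^ (2:ℤ) * z j ^ (2:ℤ)) + a ^ (-2:ℤ) * z j ^ (-2:ℤ))) *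
    ∑ σ : Equiv.Perm (Fin N), ∑ τ : Fin N → Bool, Sterm a b M N z w x σ τ := fun _ _ _ _ => rfl
  rw [hF, hF]
  have hS : ∑ σ : Equiv.Perm (Fin (N+1)), ∑ τ : Fin (N+1) → Bool,
        Sterm a b (M+1) (N+1) z w' x σ τ =
      ∑ π : Equiv.Perm (Fin N), ∑ τ : Fin N → Bool,
        Sterm a b (M+1) (N+1) z w' x ((permE N).symm (none, π)) (Fin.snoc τ true) := by
    have hτ : ∀ σ : Equiv.Perm (Fin (N+1)), ∑ τ : Fin (N+1) → Bool,
        Sterm a b (M+1) (N+1) z w' x σ τ =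
        ∑ τ : Fin N → Bool, Sterm a b (M+1) (N+1) z w' x σ (Fin.snoc τ true) := by
      intro σ
      rw [← (Fin.snocEquiv (fun _ : Fin (N+1) => Bool)).sum_comp, Fintype.sum_prod_type,
        Fintype.sum_bool]
      have h0 : ∀ τ : Fin N → Bool, Sterm a b (M+1) (N+1) z w' x σ
          (Fin.snocEquiv (fun _ : Fin (N+1) => Bool) (false, τ)) = 0 := fun τ =>
        Sterm_zero1 a b M N z w' x σ _ ha hz hw (by simp [eps, Fin.snocEquiv])
      rw [Finset.sum_eq_zero (fun τ _ => h0 τ), add_zero]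
      rfl
    simp only [hτ]
    rw [← (permE N).symm.sum_comp, Fintype.sum_prod_type, Fintype.sum_option, add_eq_left]
    refine Finset.sum_eq_zero fun i _ => Finset.sum_eq_zero fun π _ =>
      Finset.sum_eq_zero fun τ _ => ?_
    exact Sterm_zero2 a b M N z w' x _ _ ha hz hw hx (by simp [eps]) (permE_some_last π i)
  rw [hS, Fin.prod_univ_castSucc
    (f := fun j => -(a ^ (2:ℤ) * z j ^ (2:ℤ)) + a ^ (-2:ℤ) * z j ^ (-2:ℤ)), pow_succ]
  have hmain := fun π τ => Sterm_main a b M N z w' x π τ ha hz hz4 hzz hzz' hw hx hlast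
  have hsum := Finset.sum_congr (rfl : (univ : Finset (Equiv.Perm (Fin N))) = univ) fun π _ =>
    Finset.sum_congr (rfl : (univ : Finset (Fin N → Bool)) = univ) fun τ _ => hmain π τ
  simp only [← Finset.mul_sum] at hsum
  linear_combination (a ^ (2:ℤ) - a ^ (-2:ℤ)) ^ N * (a ^ (2:ℤ) - a ^ (-2:ℤ)) *
    (∏ j : Fin N, (-(a ^ (2:ℤ) * z (Fin.castSucc j) ^ (2:ℤ)) +
      a ^ (-2:ℤ) * z (Fin.castSucc j) ^ (-2:ℤ))) * hsum
end

section
/- Suppose x̄_N ≠ M (that is, x̄_N < M). Then the following factorization holds: F̄_{M,N}(z_1,…,z_N|w_1,…,w_M|x̄_1,…,x̄_N) = ∏_{j=1}^N (az_j w_M−a⁻¹z_j⁻¹)(az_j⁻¹w_M−a⁻¹z_j) × F̄_{M−1,N}(z_1,…,z_N|w_1,…,w_{M−1}|x̄_1,…,x̄_N). -/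
open Finset

/-- Property (4), second case, for the dual `F̄`: when `x̄_N ≠ M` (i.e. `x̄_N < M`;
sizes re-parametrized as `M+1` sites and `N+1` particles, so the condition reads
`x N ≤ M`), the `w_M`-dependence factors out of `F̄_{M,N}`. -/
theorem FBar_factorization (a b : ℂ) (M N : ℕ)
    (z : Fin (N + 1) → ℂ) (w : Fin (M + 1) → ℂ) (x : ℕ → ℕ)
    (ha : a ≠ 0) (hb : b ≠ 0) (hz : ∀ j, z j ≠ 0) (hz4 : ∀ j, z j ^ 4 ≠ 1)
    (hzz : ∀ j k, j ≠ k → z j ^ 2 * z k ^ 2 ≠ 1)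
    (hzz' : ∀ j k, j ≠ k → z j ^ 2 ≠ z k ^ 2)
    (hx1 : ∀ k : Fin (N + 1), 1 ≤ x k.val) (hxM : ∀ k : Fin (N + 1), x k.val ≤ M + 1)
    (hmono : ∀ j k : Fin (N + 1), j < k → x j.val < x k.val)
    (hlast : x N ≤ M) :
    FBar a b (M + 1) (N + 1) z w x
    = (∏ j : Fin (N + 1),
        ((a * z j * w (Fin.last M) - a⁻¹ * (z j)⁻¹) *
         (a * (z j)⁻¹ * w (Fin.last M) - a⁻¹ * z j))) *
      FBar a b M (N + 1) z (fun j => w (Fin.castSucc j)) x := by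
  have hxk : ∀ k : Fin (N + 1), x k.val ≤ M := by
    intro k
    rcases Nat.lt_or_ge k.val N with h | h
    · have := hmono k (Fin.last N) (by rw [Fin.lt_def]; simpa using h)
      simp only [Fin.val_last] at this
      omega
    · have : k.val = N := by omega
      rw [this]; exact hlast
  have key : ∀ (σ : Equiv.Perm (Fin (N + 1))) (τ : Fin (N + 1) → Bool),
      (∏ j : Fin (N + 1),
        ((a * z j * w (Fin.last M) - a⁻¹ * (z j)⁻¹) *
         (a * (z j)⁻¹ * w (Fin.last M) - a⁻¹ * z j))) =
      (∏ k, (a * z (σ k) ^ (-(eps τ (σ k))) * w (Fin.last M) - a⁻¹ * z (σ k) ^ (eps τ (σ k)))) *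
      (∏ k, (a * z (σ k) ^ (eps τ (σ k)) * w (Fin.last M)
        - a⁻¹ * z (σ k) ^ (-(eps τ (σ k))))) := by
    intro σ τ
    rw [← Finset.prod_mul_distrib, ← Equiv.prod_comp σ]
    refine Finset.prod_congr rfl fun k _ => ?_
    unfold eps
    cases τ (σ k) <;> simp
    ring
  have h1 : ∀ (k : Fin (N + 1)) (f : Fin (M + 1) → ℂ),
      ∏ j ∈ Finset.univ.filter (fun j : Fin (M + 1) => (j : ℕ) + 1 < x k.val), f j =
      ∏ j ∈ Finset.univ.filter (fun j : Fin M => (j : ℕ) + 1 < x k.val), f (Fin.castSucc j) := by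
    intro k f
    have := hxk k
    rw [Finset.prod_filter, Finset.prod_filter, Fin.prod_univ_castSucc,
      if_neg (by simp only [Fin.val_last]; omega), mul_one]
    rfl
  have h2 : ∀ (k : Fin (N + 1)) (f : Fin (M + 1) → ℂ),
      ∏ j ∈ Finset.univ.filter (fun j : Fin (M + 1) => x k.val ≤ (j : ℕ)), f j =
      (∏ j ∈ Finset.univ.filter (fun j : Fin M => x k.val ≤ (j : ℕ)), f (Fin.castSucc j)) *
        f (Fin.last M) := by
    intro k f
    have := hxk k
    rw [Finset.prod_filter, Finset.prod_filter, Fin.prod_univ_castSucc,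
      if_pos (by simp only [Fin.val_last]; omega)]
    rfl
  unfold FBar
  rw [mul_left_comm]
  congr 1
  rw [Finset.mul_sum]
  refine Finset.sum_congr rfl fun σ _ => ?_
  rw [Finset.mul_sum]
  refine Finset.sum_congr rfl fun τ _ => ?_
  rw [key σ τ]
  simp only [h1, h2, Fin.prod_univ_castSucc (n := M), Finset.prod_mul_distrib]
  ring
end

section
/- For nonzero complex numbers a, b and nonzero complex variables z_1,…,z_N, w_1,…,w_{M−1}, with z_N⁴ ≠ 1 and z_j z_N ≠ ±1, z_j ≠ ±z_N for j < N, the following identity holds: [(a²−a⁻²)(−a²z_N²+a⁻²z_N⁻²)/(z_N²−z_N⁻²)] · ∏_{j=1}^{N−1} [(a²z_j z_N−a⁻²z_j⁻¹z_N⁻¹)(a²z_j⁻¹z_N−a⁻²z_j z_N⁻¹)] / [(z_j z_N−z_j⁻¹z_N⁻¹)(z_j⁻¹z_N−z_j z_N⁻¹)] · (ba⁻¹z_N⁻¹−b⁻¹az_N)(az_N⁻¹−az_N³) ∏_{j=1}^{M−1}(az_N⁻¹−a⁻¹z_N w_j) ∏_{k=1}^{N−1}(az_k⁻¹−az_N²z_k)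 ∏_{j=1}^{M−1}(az_N⁻¹w_j−a⁻¹z_N) ∏_{k=1}^{N−1}(az_k−az_N²z_k⁻¹) = (a²−a⁻²)(ba⁻¹z_N⁻¹−b⁻¹az_N) ∏_{j=1}^{N}(a³z_N²z_j−a⁻¹z_j⁻¹) ∏_{j=1}^{N−1}(a³z_N²z_j⁻¹−a⁻¹z_j) ∏_{j=1}^{M−1}(az_N⁻¹w_j−a⁻¹z_N)(az_N⁻¹−a⁻¹z_N w_j). -/
open Finset

/-- The single-variable factor. -/
lemma frozen_aux_one (a x : ℂ) (ha : a ≠ 0) (hx : x ≠ 0) (h : x ^ 4 ≠ 1) :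
    (-(a ^ (2:ℤ) * x ^ (2:ℤ)) + a ^ (-2:ℤ) * x ^ (-2:ℤ)) / (x ^ (2:ℤ) - x ^ (-2:ℤ)) *
      (a * x⁻¹ - a * x ^ 3) = a ^ 3 * x ^ 2 * x - a⁻¹ * x⁻¹ := by
  have e : a * x⁻¹ - a * x ^ 3 = -(a * x) * (x ^ (2:ℤ) - x ^ (-2:ℤ)) := by
    simp only [zpow_neg, zpow_ofNat]
    field_simp
    ring
  have hd : x ^ (2:ℤ) - x ^ (-2:ℤ) ≠ 0 := by
    intro h0
    apply h
    simp only [zpow_neg, zpow_ofNat] at h0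
    field_simp at h0
    linear_combination h0
  rw [e, div_mul_eq_mul_div, div_eq_iff hd]
  simp only [zpow_neg, zpow_ofNat]
  field_simp
  ring

/-- The two-variable factor. -/
lemma frozen_aux_two (a x y : ℂ) (ha : a ≠ 0) (hx : x ≠ 0) (hy : y ≠ 0)
    (h1 : y * x ≠ 1) (h2 : y * x ≠ -1) (h3 : y ≠ x) (h4 : y ≠ -x) :
    ((a ^ (2:ℤ) * y * x - a ^ (-2:ℤ) * y⁻¹ * x⁻¹) *
        (a ^ (2:ℤ) * y⁻¹ * x - a ^ (-2:ℤ) * y * x⁻¹)) /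
      ((y * x - y⁻¹ * x⁻¹) * (y⁻¹ * x - y * x⁻¹)) *
      (a * y⁻¹ - a * x ^ 2 * y) * (a * y - a * x ^ 2 * y⁻¹) =
    (a ^ 3 * x ^ 2 * y - a⁻¹ * y⁻¹) * (a ^ 3 * x ^ 2 * y⁻¹ - a⁻¹ * y) := by
  have e1 : a * y⁻¹ - a * x ^ 2 * y = -(a * x) * (y * x - y⁻¹ * x⁻¹) := by
    field_simp
    ring
  have e2 : a * y - a * x ^ 2 * y⁻¹ = -(a * x) * (y⁻¹ * x - y * x⁻¹) := by
    field_simp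
    ring
  have d1 : y * x - y⁻¹ * x⁻¹ ≠ 0 := by
    intro h0
    have : (y * x - 1) * (y * x + 1) = 0 := by
      field_simp at h0
      linear_combination h0
    rcases mul_eq_zero.mp this with h | h
    · exact h1 (by linear_combination h)
    · exact h2 (by linear_combination h)
  have d2 : y⁻¹ * x - y * x⁻¹ ≠ 0 := by
    intro h0
    have : (y - x) * (y + x) = 0 := by
      field_simp at h0
      linear_combination -h0
    rcases mul_eq_zero.mp this with h | h
    · exact h3 (by linear_combination h)
    · exact h4 (by linear_combination h)
  have f1 : a ^ 3 * x ^ 2 * y - a⁻¹ * y⁻¹ =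
      a * x * (a ^ (2:ℤ) * y * x - a ^ (-2:ℤ) * y⁻¹ * x⁻¹) := by
    simp only [zpow_neg, zpow_ofNat]
    field_simp
  have f2 : a ^ 3 * x ^ 2 * y⁻¹ - a⁻¹ * y =
      a * x * (a ^ (2:ℤ) * y⁻¹ * x - a ^ (-2:ℤ) * y * x⁻¹) := by
    simp only [zpow_neg, zpow_ofNat]
    field_simp
  rw [e1, e2, f1, f2, mul_assoc, div_mul_eq_mul_div, div_eq_iff (mul_ne_zero d1 d2)]
  ring

/-- The key intermediate simplification of frozen-boundary factors in the proof of the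
recursion (Property (4), case `x_N = M`) for the symmetric function `F_{M,N}`.
Here `z : Fin (N+1) → ℂ` encodes `z_1,…,z_N` (so `z (Fin.last N)` is `z_N` and
`z (Fin.castSucc j)` for `j : Fin N` runs over `z_1,…,z_{N-1}`), and
`w : Fin M → ℂ` encodes `w_1,…,w_{M-1}`. -/
theorem frozen_factor_simplification (N M : ℕ) (a b : ℂ)
    (z : Fin (N + 1) → ℂ) (w : Fin M → ℂ)
    (ha : a ≠ 0) (hb : b ≠ 0) (hz : ∀ j, z j ≠ 0) (hw : ∀ j, w j ≠ 0)
    (hzN4 : z (Fin.last N) ^ 4 ≠ 1)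
    (hmix : ∀ j : Fin N,
      z (Fin.castSucc j) * z (Fin.last N) ≠ 1 ∧
      z (Fin.castSucc j) * z (Fin.last N) ≠ -1 ∧
      z (Fin.castSucc j) ≠ z (Fin.last N) ∧
      z (Fin.castSucc j) ≠ -z (Fin.last N)) :
    ((a ^ (2:ℤ) - a ^ (-2:ℤ)) *
        (-(a ^ (2:ℤ) * z (Fin.last N) ^ (2:ℤ)) + a ^ (-2:ℤ) * z (Fin.last N) ^ (-2:ℤ)) /
        (z (Fin.last N) ^ (2:ℤ) - z (Fin.last N) ^ (-2:ℤ))) *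
      (∏ j : Fin N,
        ((a ^ (2:ℤ) * z (Fin.castSucc j) * z (Fin.last N)
            - a ^ (-2:ℤ) * (z (Fin.castSucc j))⁻¹ * (z (Fin.last N))⁻¹) *
          (a ^ (2:ℤ) * (z (Fin.castSucc j))⁻¹ * z (Fin.last N)
            - a ^ (-2:ℤ) * z (Fin.castSucc j) * (z (Fin.last N))⁻¹)) /
        ((z (Fin.castSucc j) * z (Fin.last N)
            - (z (Fin.castSucc j))⁻¹ * (z (Fin.last N))⁻¹) *
          ((z (Fin.castSucc j))⁻¹ * z (Fin.last N)
            - z (Fin.castSucc j) * (z (Fin.last N))⁻¹))) *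
      (b * a⁻¹ * (z (Fin.last N))⁻¹ - b⁻¹ * a * z (Fin.last N)) *
      (a * (z (Fin.last N))⁻¹ - a * z (Fin.last N) ^ 3) *
      (∏ j, (a * (z (Fin.last N))⁻¹ - a⁻¹ * z (Fin.last N) * w j)) *
      (∏ k : Fin N, (a * (z (Fin.castSucc k))⁻¹ - a * z (Fin.last N) ^ 2 * z (Fin.castSucc k))) *
      (∏ j, (a * (z (Fin.last N))⁻¹ * w j - a⁻¹ * z (Fin.last N))) *
      (∏ k : Fin N, (a * z (Fin.castSucc k) - a * z (Fin.last N) ^ 2 * (z (Fin.castSucc k))⁻¹))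
    = (a ^ (2:ℤ) - a ^ (-2:ℤ)) *
      (b * a⁻¹ * (z (Fin.last N))⁻¹ - b⁻¹ * a * z (Fin.last N)) *
      (∏ j : Fin (N + 1), (a ^ 3 * z (Fin.last N) ^ 2 * z j - a⁻¹ * (z j)⁻¹)) *
      (∏ j : Fin N, (a ^ 3 * z (Fin.last N) ^ 2 * (z (Fin.castSucc j))⁻¹ - a⁻¹ * z (Fin.castSucc j))) *
      (∏ j, ((a * (z (Fin.last N))⁻¹ * w j - a⁻¹ * z (Fin.last N)) *
        (a * (z (Fin.last N))⁻¹ - a⁻¹ * z (Fin.last N) * w j))) := by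
  have key := Finset.prod_congr (rfl : (Finset.univ : Finset (Fin N)) = Finset.univ)
    (fun j _ => frozen_aux_two a (z (Fin.last N)) (z (Fin.castSucc j)) ha (hz _) (hz _)
      (hmix j).1 (hmix j).2.1 (hmix j).2.2.1 (hmix j).2.2.2)
  have one := frozen_aux_one a (z (Fin.last N)) ha (hz _) hzN4
  rw [Finset.prod_mul_distrib, Finset.prod_mul_distrib, Finset.prod_mul_distrib] at key
  rw [Fin.prod_univ_castSucc, ← one, Finset.prod_mul_distrib (f := fun j =>
    a * (z (Fin.last N))⁻¹ * w j - a⁻¹ * z (Fin.last N)), mul_div_assoc]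
  generalize (∏ j : Fin N, (_ / _ : ℂ)) = P at key ⊢
  generalize (_ / _ : ℂ) = Q at key ⊢
  linear_combination ((a ^ (2:ℤ) - a ^ (-2:ℤ)) * Q *
    (b * a⁻¹ * (z (Fin.last N))⁻¹ - b⁻¹ * a * z (Fin.last N)) *
    (a * (z (Fin.last N))⁻¹ - a * z (Fin.last N) ^ 3) *
    (∏ j, (a * (z (Fin.last N))⁻¹ - a⁻¹ * z (Fin.last N) * w j)) *
    (∏ j, (a * (z (Fin.last N))⁻¹ * w j - a⁻¹ * z (Fin.last N)))) * key
end
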